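/- arXiv:1712.04016 — 2 statements merged into one kernel-verified Lean document; each statement's English description precedes it below -/
import Mathlib

section
/- Let (Q, 𝔫, k) be a commutative Noetherian local ring and I ⊆ Q a grade 3 perfect ideal of resolution format (1, m, m+n−1, n). If m ≥ 4, then there exists a grade 3 perfect ideal of resolution format (1, m+1, m+n+1, n+1) that is linked to I. -/
/-- An ideal `I` in a commutative Noetherian local ring `Q` has **resolution format**
`(1, m, m+n-1, n)` if the minimal free resolution of `Q/I` over `Q` is
`0 → Q^n → Q^{m+n-1} → Q^m → Q`, i.e. there is an exact complex of free modules of the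
indicated ranks augmented by `Q → Q/I → 0`, which is minimal in the sense that each
differential maps into `𝔫` times the target (`𝔫` the maximal ideal).  Equivalently, the
`i`-th entry of the format is the Betti number `dim_k Tor_i^Q(Q/I, k)`. -/
def HasResolutionFormat {Q : Type*} [CommRing Q] [IsLocalRing Q]
    (I : Ideal Q) (m n : ℕ) : Prop :=
  ∃ (d1 : (Fin m → Q) →ₗ[Q] Q)
    (d2 : (Fin (m + n - 1) → Q) →ₗ[Q] (Fin m → Q))
    (d3 : (Fin n → Q) →ₗ[Q] (Fin (m + n - 1) → Q)),
    LinearMap.range d1 = I ∧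
    LinearMap.range d2 = LinearMap.ker d1 ∧
    LinearMap.range d3 = LinearMap.ker d2 ∧
    LinearMap.ker d3 = ⊥ ∧
    I ≤ IsLocalRing.maximalIdeal Q ∧
    LinearMap.range d2 ≤ (IsLocalRing.maximalIdeal Q) • (⊤ : Submodule Q (Fin m → Q)) ∧
    LinearMap.range d3 ≤ (IsLocalRing.maximalIdeal Q) • (⊤ : Submodule Q (Fin (m + n - 1) → Q))

/-- `I` is a grade `3` perfect ideal of resolution format `(1, m, m+n-1, n)`:
`I` contains a `Q`-regular sequence of length `3`, one has `m ≥ 3` and `n ≥ 1`, and the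
minimal free resolution of `Q/I` has the format `(1, m, m+n-1, n)` (in particular `Q/I`
has projective dimension `3` as a `Q`-module, since `n ≥ 1`). -/
def IsGrade3PerfectOfFormat {Q : Type*} [CommRing Q] [IsLocalRing Q]
    (I : Ideal Q) (m n : ℕ) : Prop :=
  (∃ x y z : Q, x ∈ I ∧ y ∈ I ∧ z ∈ I ∧ RingTheory.Sequence.IsRegular Q [x, y, z]) ∧
  3 ≤ m ∧ 1 ≤ n ∧ HasResolutionFormat I m n

/-- `J` is **directly linked** to `I` if there is a `Q`-regular sequence `x₁, x₂, x₃` of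
elements of `I` with `J = (x₁, x₂, x₃) : I`. -/
def DirectlyLinked {Q : Type*} [CommRing Q] (I J : Ideal Q) : Prop :=
  ∃ x y z : Q, x ∈ I ∧ y ∈ I ∧ z ∈ I ∧ RingTheory.Sequence.IsRegular Q [x, y, z] ∧
    J = Submodule.colon (Ideal.span {x, y, z}) I

/-- `J` is **linked** to `I` if there is a finite chain of ideals
`I = J₀, J₁, …, J_r = J` in which `J_{i+1}` is directly linked to `J_i` for every `i`. -/
def Linked {Q : Type*} [CommRing Q] (I J : Ideal Q) : Prop :=
  Relation.ReflTransGen (fun A B => DirectlyLinked A B) I J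

/-- `I` is **licci** if it is linked to an ideal generated by a `Q`-regular sequence of
length `3`, i.e. `I` is in the linkage class of a complete intersection ideal. -/
def Licci {Q : Type*} [CommRing Q] (I : Ideal Q) : Prop :=
  ∃ C : Ideal Q, Linked I C ∧
    ∃ x y z : Q, RingTheory.Sequence.IsRegular Q [x, y, z] ∧ C = Ideal.span {x, y, z}


/-- Elementwise form of weak regularity of `x, y, z` on a module. -/
def WR3 {Q : Type*} [CommRing Q] (x y z : Q) (M : Type*) [AddCommGroup M] [Module Q M] : Prop :=
  (∀ c : M, x • c = 0 → c = 0) ∧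
  (∀ c u : M, y • c = x • u → ∃ w, c = x • w) ∧
  (∀ c u v : M, z • c = x • u + y • v → ∃ p q, c = x • p + y • q)

section
variable {Q : Type*} [CommRing Q] {x y z : Q}

lemma WR3.pi {M : Type*} [AddCommGroup M] [Module Q M] (h : WR3 x y z M) (ι : Type*) :
    WR3 x y z (ι → M) := by
  obtain ⟨h1, h2, h3⟩ := h
  refine ⟨fun c hc => funext fun i => h1 _ (congrFun hc i), fun c u hc => ?_, fun c u v hc => ?_⟩
  · choose w hw using fun i => h2 (c i) (u i) (congrFun hc i)
    exact ⟨w, funext hw⟩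
  · choose p q hw using fun i => h3 (c i) (u i) (v i) (congrFun hc i)
    exact ⟨p, q, funext hw⟩

lemma WR3.congr {M N : Type*} [AddCommGroup M] [Module Q M] [AddCommGroup N] [Module Q N]
    (h : WR3 x y z M) (e : M ≃ₗ[Q] N) : WR3 x y z N := by
  obtain ⟨h1, h2, h3⟩ := h
  refine ⟨fun c hc => ?_, fun c u hc => ?_, fun c u v hc => ?_⟩
  · have := h1 (e.symm c) (by rw [← map_smul, hc, map_zero])
    simpa using this
  · obtain ⟨w, hw⟩ := h2 (e.symm c) (e.symm u) (by rw [← map_smul, hc, map_smul])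
    exact ⟨e w, by rw [← map_smul, ← hw, e.apply_symm_apply]⟩
  · obtain ⟨p, q, hw⟩ := h3 (e.symm c) (e.symm u) (e.symm v)
      (by rw [← map_smul, hc, map_add, map_smul, map_smul])
    exact ⟨e p, e q, by rw [← map_smul, ← map_smul, ← map_add, ← hw, e.apply_symm_apply]⟩

lemma WR3.hom {M : Type*} [AddCommGroup M] [Module Q M] (h : WR3 x y z M) {ι P : Type*}
    [AddCommGroup P] [Module Q P] (b : Module.Basis ι Q P) : WR3 x y z (P →ₗ[Q] M) :=
  (h.pi ι).congr (b.constr Q)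

lemma lift_free {ι N P : Type*} [AddCommGroup N] [Module Q N] [AddCommGroup P] [Module Q P]
    {F : Type*} [AddCommGroup F] [Module Q F] (b : Module.Basis ι Q F)
    (d : N →ₗ[Q] P) (g : F →ₗ[Q] P) (h : ∀ v, g v ∈ LinearMap.range d) :
    ∃ s : F →ₗ[Q] N, ∀ v, d (s v) = g v := by
  choose s hs using fun i => h (b i)
  refine ⟨b.constr Q s, fun v => ?_⟩
  have : d ∘ₗ b.constr Q s = g := b.ext fun i => by simp [hs]
  exact congrArg (fun f => f v) this

/-- The complex data. -/
lemma exists_homotopy {F1 F2 F3 ι1 ι2 : Type*} [AddCommGroup F1] [Module Q F1] [AddCommGroup F2]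
    [Module Q F2] [AddCommGroup F3] [Module Q F3] (b1 : Module.Basis ι1 Q F1)
    (b2 : Module.Basis ι2 Q F2)
    (d1 : F1 →ₗ[Q] Q) (d2 : F2 →ₗ[Q] F1) (d3 : F3 →ₗ[Q] F2)
    (e1 : LinearMap.range d2 = LinearMap.ker d1) (e2 : LinearMap.range d3 = LinearMap.ker d2)
    (e3 : LinearMap.ker d3 = ⊥) (f : Q) (hf : f ∈ LinearMap.range d1) :
    ∃ (s0 : Q →ₗ[Q] F1) (s1 : F1 →ₗ[Q] F2) (s2 : F2 →ₗ[Q] F3),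
      (∀ v, s0 (d1 v) + d2 (s1 v) = f • v) ∧ (∀ v, s1 (d2 v) + d3 (s2 v) = f • v) ∧
      (∀ v, s2 (d3 v) = f • v) ∧ d1 (s0 1) = f := by
  obtain ⟨a, ha⟩ := hf
  have c1 : ∀ v, d1 (d2 v) = 0 := fun v => by
    have : d2 v ∈ LinearMap.ker d1 := e1 ▸ LinearMap.mem_range_self d2 v
    exact this
  have c2 : ∀ v, d2 (d3 v) = 0 := fun v => by
    have : d3 v ∈ LinearMap.ker d2 := e2 ▸ LinearMap.mem_range_self d3 v
    exact this
  let s0 : Q →ₗ[Q] F1 := LinearMap.toSpanSingleton Q F1 a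
  obtain ⟨s1, h1⟩ := lift_free b1 d2 (f • LinearMap.id - s0 ∘ₗ d1) (by
    intro v
    rw [e1, LinearMap.mem_ker]
    simp [s0, ha, mul_comm])
  obtain ⟨s2, h2⟩ := lift_free b2 d3 (f • LinearMap.id - s1 ∘ₗ d2) (by
    intro v
    rw [e2, LinearMap.mem_ker]
    simp [h1, c1])
  refine ⟨s0, s1, s2, fun v => by simp [h1], fun v => by simp [h2], fun v => ?_, by simp [s0, ha]⟩
  apply LinearMap.ker_eq_bot.mp e3
  simp [h2, c2]

/-- Double-link duality: `(x,y,z) : ((x,y,z) : I) ⊆ I`. -/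
lemma double_colon {F1 F2 F3 ι1 ι2 ι3 : Type*} [Finite ι1] [Finite ι2] [Finite ι3]
    [AddCommGroup F1] [Module Q F1] [AddCommGroup F2]
    [Module Q F2] [AddCommGroup F3] [Module Q F3] (b1 : Module.Basis ι1 Q F1)
    (b2 : Module.Basis ι2 Q F2) (b3 : Module.Basis ι3 Q F3)
    (d1 : F1 →ₗ[Q] Q) (d2 : F2 →ₗ[Q] F1) (d3 : F3 →ₗ[Q] F2)
    (e1 : LinearMap.range d2 = LinearMap.ker d1) (e2 : LinearMap.range d3 = LinearMap.ker d2)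
    (e3 : LinearMap.ker d3 = ⊥) (hW : WR3 x y z Q)
    (hx : x ∈ LinearMap.range d1) (hy : y ∈ LinearMap.range d1) (hz : z ∈ LinearMap.range d1)
    (r : Q) (hr : ∀ j, (∀ i ∈ LinearMap.range d1, ∃ p q t, j * i = x * p + y * q + z * t) →
      ∃ p q t, r * j = x * p + y * q + z * t) : r ∈ LinearMap.range d1 := by
  have c1 : ∀ v, d1 (d2 v) = 0 := fun v => by
    have : d2 v ∈ LinearMap.ker d1 := e1 ▸ LinearMap.mem_range_self d2 v
    exact this
  have c2 : ∀ v, d2 (d3 v) = 0 := fun v => by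
    have : d3 v ∈ LinearMap.ker d2 := e2 ▸ LinearMap.mem_range_self d3 v
    exact this
  obtain ⟨x0, x1, x2, X0, X1, X2, X3⟩ := exists_homotopy b1 b2 d1 d2 d3 e1 e2 e3 x hx
  obtain ⟨y0, y1, y2, Y0, Y1, Y2, Y3⟩ := exists_homotopy b1 b2 d1 d2 d3 e1 e2 e3 y hy
  obtain ⟨z0, z1, z2, Z0, Z1, Z2, Z3⟩ := exists_homotopy b1 b2 d1 d2 d3 e1 e2 e3 z hz
  have hF1 : WR3 x y z F1 := (hW.pi ι1).congr b1.equivFun.symm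
  have hF2 : WR3 x y z F2 := (hW.pi ι2).congr b2.equivFun.symm
  have hF3 : WR3 x y z F3 := (hW.pi ι3).congr b3.equivFun.symm
  -- step 3
  have S3 : ∃ h : F2 →ₗ[Q] F3, ∀ v, h (d3 v) = r • v := by
    -- c0 = x2 y1 z0 1
    set w : F3 := x2 (y1 (z0 1)) with hw
    have key : ∃ p q t : F3, r • w = x • p + y • q + z • t := by
      have : ∀ i, ∃ p q t, r * (b3.equivFun w i) = x * p + y * q + z * t := by
        intro i
        apply hr
        rintro _ ⟨v, rfl⟩
        let g : F3 →ₗ[Q] Q := LinearMap.proj i ∘ₗ b3.equivFun.toLinearMap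
        have : (d1 v) • w = x • (y2 (z1 v)) + y • (- x2 (z1 v)) + z • x2 (y1 v) := by
          have E0 : (d1 v) • w = x2 (y1 (z0 (d1 v))) := by
            rw [hw, ← map_smul, ← map_smul, ← map_smul, smul_eq_mul, mul_one]
          have E1 : z0 (d1 v) = z • v - d2 (z1 v) := eq_sub_of_add_eq (Z0 v)
          have E2 : y1 (d2 (z1 v)) = y • (z1 v) - d3 (y2 (z1 v)) := eq_sub_of_add_eq (Y1 _)
          rw [E0, E1]
          simp only [map_sub, map_smul, E2, X2]
          module
        refine ⟨g (y2 (z1 v)), g (- x2 (z1 v)), g (x2 (y1 v)), ?_⟩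
        have := congrArg g this
        simp only [map_add, map_smul, smul_eq_mul] at this
        rw [← this, mul_comm]
        rfl
      choose p q t h using this
      refine ⟨b3.equivFun.symm p, b3.equivFun.symm q, b3.equivFun.symm t, ?_⟩
      apply b3.equivFun.injective
      simp only [map_add, map_smul, LinearEquiv.apply_symm_apply]
      exact funext h
    obtain ⟨p, q, t, key⟩ := key
    -- c1 = r • x2 y1 : F1 → F3 
    let c2' : F2 →ₗ[Q] F3 := r • x2
    let c1' : F1 →ₗ[Q] F3 := r • (x2 ∘ₗ y1)
    let P : Q →ₗ[Q] F3 := LinearMap.toSpanSingleton Q F3 p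
    let Q' : Q →ₗ[Q] F3 := LinearMap.toSpanSingleton Q F3 q
    let T : Q →ₗ[Q] F3 := LinearMap.toSpanSingleton Q F3 t
    obtain ⟨U, V, hUV⟩ := (hF3.hom b1).2.2 (c1' - T ∘ₗ d1)
      (P ∘ₗ d1 - r • (y2 ∘ₗ z1)) (Q' ∘ₗ d1 + r • (x2 ∘ₗ z1)) (by
        ext v
        have E1 : z0 (d1 v) = z • v - d2 (z1 v) := eq_sub_of_add_eq (Z0 v)
        have E2 : y1 (d2 (z1 v)) = y • (z1 v) - d3 (y2 (z1 v)) := eq_sub_of_add_eq (Y1 _)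
        have E0 : (d1 v) • w = x2 (y1 (z0 (d1 v))) := by
          rw [hw, ← map_smul, ← map_smul, ← map_smul, smul_eq_mul, mul_one]
        rw [E1] at E0
        simp only [map_sub, map_smul, E2, X2] at E0
        have key' := congrArg (fun e => d1 v • e) key
        rw [smul_comm, E0] at key'
        simp only [c1', P, Q', T, LinearMap.smul_apply, LinearMap.sub_apply, LinearMap.add_apply,
          LinearMap.comp_apply, LinearMap.toSpanSingleton_apply]
        linear_combination (norm := module) key')
    obtain ⟨W, hWW⟩ := (hF3.hom b2).2.1 (c2' - V ∘ₗ d2) (U ∘ₗ d2 + r • y2) (by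
      ext v
      have E2 : y1 (d2 v) = y • v - d3 (y2 v) := eq_sub_of_add_eq (Y1 _)
      have := congrArg (fun e => e (d2 v)) hUV
      simp only [c1', T, LinearMap.smul_apply, LinearMap.sub_apply, LinearMap.add_apply,
          LinearMap.comp_apply, LinearMap.toSpanSingleton_apply, c1, E2, map_sub, map_smul, X2] at this
      simp only [c2', LinearMap.smul_apply, LinearMap.sub_apply, LinearMap.add_apply,
          LinearMap.comp_apply]
      linear_combination (norm := module) this)
    refine ⟨W, fun v => ?_⟩
    have := congrArg (fun e => e (d3 v)) hWW
    simp only [c2', LinearMap.smul_apply, LinearMap.sub_apply, LinearMap.comp_apply, c2, X2,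
      map_zero] at this
    have h0 := hF3.1 (W (d3 v) - r • v) (by linear_combination (norm := module) -this)
    exact sub_eq_zero.mp h0
  obtain ⟨h, hh⟩ := S3
  -- step 2
  have S2 : ∃ h1 : F1 →ₗ[Q] F2, ∀ v, h1 (d2 v) = r • v - d3 (h v) := by
    let c : F2 →ₗ[Q] F2 := r • LinearMap.id - d3 ∘ₗ h
    have hc : ∀ v, c (d3 v) = 0 := fun v => by simp [c, hh]
    let a1 : F1 →ₗ[Q] F2 := c ∘ₗ x1
    have A1 : ∀ v, a1 (d2 v) = x • c v := fun v => by
      have : x1 (d2 v) = x • v - d3 (x2 v) := eq_sub_of_add_eq (X1 v)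
      simp [a1, this, hc]
    let a0 : Q →ₗ[Q] F2 := a1 ∘ₗ y0
    have A0 : ∀ v, a0 (d1 v) = y • a1 v - x • c (y1 v) := fun v => by
      have : y0 (d1 v) = y • v - d2 (y1 v) := eq_sub_of_add_eq (Y0 v)
      simp [a0, this, A1]
    obtain ⟨p, q, hpq⟩ := hF2.2.2 (a0 1) (- c (y1 (z0 1))) (a1 (z0 1)) (by
      have : d1 (z0 1) = z := Z3
      have h := A0 (z0 1)
      rw [this] at h
      rw [← map_smul, smul_eq_mul, mul_one, h]
      module)
    let P : Q →ₗ[Q] F2 := LinearMap.toSpanSingleton Q F2 p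
    let Q' : Q →ₗ[Q] F2 := LinearMap.toSpanSingleton Q F2 q
    obtain ⟨W, hWW⟩ := (hF2.hom b1).2.1 (a1 - Q' ∘ₗ d1) (P ∘ₗ d1 + c ∘ₗ y1) (by
      ext v
      have h := A0 v
      have : a0 (d1 v) = d1 v • (a0 1) := by rw [← map_smul, smul_eq_mul, mul_one]
      rw [this, hpq] at h
      simp only [P, Q', LinearMap.smul_apply, LinearMap.sub_apply, LinearMap.add_apply,
          LinearMap.comp_apply, LinearMap.toSpanSingleton_apply]
      linear_combination (norm := module) -h)
    refine ⟨W, fun v => ?_⟩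
    have := congrArg (fun e => e (d2 v)) hWW
    simp only [LinearMap.smul_apply, LinearMap.sub_apply, LinearMap.comp_apply, c1, A1,
      map_zero] at this
    have h0 := hF2.1 (W (d2 v) - c v) (by linear_combination (norm := module) -this)
    exact sub_eq_zero.mp h0
  obtain ⟨h1, hh1⟩ := S2
  have S1 : ∃ h0 : Q →ₗ[Q] F1, ∀ v, h0 (d1 v) = r • v - d2 (h1 v) := by
    let c : F1 →ₗ[Q] F1 := r • LinearMap.id - d2 ∘ₗ h1
    have hc : ∀ v, c (d2 v) = 0 := fun v => by simp [c, hh1, c2]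
    let a0 : Q →ₗ[Q] F1 := c ∘ₗ x0
    have A0 : ∀ v, a0 (d1 v) = x • c v := fun v => by
      have : x0 (d1 v) = x • v - d2 (x1 v) := eq_sub_of_add_eq (X0 v)
      simp [a0, this, hc]
    obtain ⟨p, hp⟩ := hF1.2.1 (a0 1) (c (y0 1)) (by
      have : d1 (y0 1) = y := Y3
      have h := A0 (y0 1)
      rw [this] at h
      rw [← map_smul, smul_eq_mul, mul_one, h])
    refine ⟨LinearMap.toSpanSingleton Q F1 p, fun v => ?_⟩
    have h := A0 v
    have h' : a0 (d1 v) = d1 v • (a0 1) := by rw [← map_smul, smul_eq_mul, mul_one]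
    rw [h', hp] at h
    have h0 := hF1.1 (d1 v • p - c v) (by linear_combination (norm := module) h)
    rw [LinearMap.toSpanSingleton_apply]
    exact sub_eq_zero.mp h0
  obtain ⟨h0, hh0⟩ := S1
  refine ⟨h0 1, ?_⟩
  obtain ⟨v, hv⟩ := hx
  have h := congrArg d1 (hh0 v)
  rw [hv, ← mul_one x, ← smul_eq_mul, map_smul] at h
  simp only [map_smul, map_sub, c1, smul_eq_mul, sub_zero, hv] at h
  have := hW.1 (d1 (h0 1) - r) (by simp only [smul_eq_mul]; linear_combination h)
  exact sub_eq_zero.mp this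
end

section
open IsLocalRing
variable {Q : Type*} [CommRing Q]

lemma smul_top_map {M N : Type*} [AddCommGroup M] [Module Q M] [AddCommGroup N] [Module Q N]
    (a : Ideal Q) (f : M →ₗ[Q] N) {v : M} (hv : v ∈ a • (⊤ : Submodule Q M)) :
    f v ∈ a • (⊤ : Submodule Q N) := by
  have : f v ∈ (a • (⊤ : Submodule Q M)).map f := Submodule.mem_map_of_mem hv
  rw [Submodule.map_smul''] at this
  exact Submodule.smul_mono le_rfl le_top this

lemma format_of [IsLocalRing Q] {E1 E2 E3 : Type*} [AddCommGroup E1] [Module Q E1]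
    [AddCommGroup E2] [Module Q E2] [AddCommGroup E3] [Module Q E3]
    [Module.Free Q E1] [Module.Free Q E2] [Module.Free Q E3]
    [Module.Finite Q E1] [Module.Finite Q E2] [Module.Finite Q E3] {m n : ℕ} (I : Ideal Q)
    (r1 : Module.finrank Q E1 = m) (r2 : Module.finrank Q E2 = m + n - 1)
    (r3 : Module.finrank Q E3 = n)
    (D1 : E1 →ₗ[Q] Q) (D2 : E2 →ₗ[Q] E1) (D3 : E3 →ₗ[Q] E2)
    (h1 : LinearMap.range D1 = I) (h2 : LinearMap.range D2 = LinearMap.ker D1)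
    (h3 : LinearMap.range D3 = LinearMap.ker D2) (h4 : LinearMap.ker D3 = ⊥)
    (h5 : I ≤ maximalIdeal Q) (h6 : ∀ v, D2 v ∈ maximalIdeal Q • (⊤ : Submodule Q E1))
    (h7 : ∀ v, D3 v ∈ maximalIdeal Q • (⊤ : Submodule Q E2)) :
    HasResolutionFormat I m n := by
  let e1 : E1 ≃ₗ[Q] (Fin m → Q) := LinearEquiv.ofFinrankEq _ _ (by simp [r1])
  let e2 : E2 ≃ₗ[Q] (Fin (m + n - 1) → Q) := LinearEquiv.ofFinrankEq _ _ (by simp [r2])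
  let e3 : E3 ≃ₗ[Q] (Fin n → Q) := LinearEquiv.ofFinrankEq _ _ (by simp [r3])
  refine ⟨D1 ∘ₗ e1.symm.toLinearMap, e1.toLinearMap ∘ₗ D2 ∘ₗ e2.symm.toLinearMap,
    e2.toLinearMap ∘ₗ D3 ∘ₗ e3.symm.toLinearMap, ?_, ?_, ?_, ?_, h5, ?_, ?_⟩
  · rw [LinearMap.range_comp_of_range_eq_top _ e1.symm.range, h1]
  · ext v
    have := SetLike.ext_iff.mp h2 (e1.symm v)
    simp only [LinearMap.mem_range, LinearMap.mem_ker, LinearMap.comp_apply,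
      LinearEquiv.coe_coe] at this ⊢
    rw [← this]
    constructor
    · rintro ⟨w, rfl⟩; exact ⟨e2.symm w, by simp⟩
    · rintro ⟨w, hw⟩; exact ⟨e2 w, by simp [hw]⟩
  · ext v
    have := SetLike.ext_iff.mp h3 (e2.symm v)
    simp only [LinearMap.mem_range, LinearMap.mem_ker, LinearMap.comp_apply,
      LinearEquiv.coe_coe, map_eq_zero_iff e1 e1.injective] at this ⊢
    rw [← this]
    constructor
    · rintro ⟨w, rfl⟩; exact ⟨e3.symm w, by simp⟩
    · rintro ⟨w, hw⟩; exact ⟨e3 w, by simp [hw]⟩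
  · rw [LinearMap.ker_eq_bot] at h4 ⊢
    exact e2.injective.comp (h4.comp e3.symm.injective)
  · rintro _ ⟨v, rfl⟩
    exact smul_top_map _ e1.toLinearMap (h6 _)
  · rintro _ ⟨v, rfl⟩
    exact smul_top_map _ e2.toLinearMap (h7 _)

/-- splitting off a minimal generator -/
lemma split_off [IsLocalRing Q] {m : ℕ} (a : Fin m → Q)
    (ha : a ∉ maximalIdeal Q • (⊤ : Submodule Q (Fin m → Q))) :
    ∃ l : (Fin m → Q) →ₗ[Q] Q, l a = 1 := by
  by_contra hl
  apply ha
  have : ∀ i, a i ∈ maximalIdeal Q := by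
    intro i
    rw [mem_maximalIdeal, mem_nonunits_iff]
    rintro ⟨u, hu⟩
    exact hl ⟨(↑u⁻¹ : Q) • LinearMap.proj i, by simp [← hu]⟩
  rw [pi_eq_sum_univ a]
  exact Submodule.sum_mem _ fun i _ => Submodule.smul_mem_smul (this i) trivial

lemma new_format [IsLocalRing Q] {m n : ℕ} {I : Ideal Q} (h : HasResolutionFormat I m n)
    (hm : 1 ≤ m) {x u z : Q} (hx : x ∈ I) (hx' : x ∉ maximalIdeal Q • I) (hu : u ∈ I) (hz : z ∈ I)
    (hW : WR3 x (u * u) z Q) :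
    HasResolutionFormat (Ideal.span {x, u * u} ⊔ Ideal.span {z} * I) (m + 1) (n + 1) := by
  obtain ⟨d1, d2, d3, H1, H2, H3, H4, H5, H6, H7⟩ := h
  have c1 : ∀ v, d1 (d2 v) = 0 := fun v => by
    have : d2 v ∈ LinearMap.ker d1 := H2 ▸ LinearMap.mem_range_self d2 v
    exact this
  have c2 : ∀ v, d2 (d3 v) = 0 := fun v => by
    have : d3 v ∈ LinearMap.ker d2 := H3 ▸ LinearMap.mem_range_self d3 v
    exact this
  have hdI : ∀ v, d1 v ∈ I := fun v => H1 ▸ LinearMap.mem_range_self d1 v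
  obtain ⟨a, ha⟩ : ∃ a, d1 a = x := by rw [← H1] at hx; exact hx
  obtain ⟨b0, hb0⟩ : ∃ a, d1 a = u := by rw [← H1] at hu; exact hu
  obtain ⟨l, hl⟩ := split_off a (fun h => hx' (by
    have : d1 a ∈ (maximalIdeal Q • (⊤ : Submodule Q (Fin m → Q))).map d1 :=
      Submodule.mem_map_of_mem h
    rw [Submodule.map_smul'', Submodule.map_top, H1, ha] at this
    exact this))
  obtain ⟨w1, hw1⟩ : ∃ w, d2 w = x • b0 - u • a := by
    have : x • b0 - u • a ∈ LinearMap.ker d1 := by simp [ha, hb0, mul_comm]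
    rw [← H2] at this; exact this
  set y := u * u with hy
  let b := u • b0
  let w0 := u • w1
  have hw0 : d2 w0 = x • b - y • a := by
    simp only [w0, b, map_smul, hw1, hy]; module
  have hb : d1 b = y := by simp [b, hb0, hy]
  have um := H5 hu
  have xm := H5 hx
  have zm := H5 hz
  have ym : y ∈ maximalIdeal Q := Ideal.mul_mem_left _ _ um
  -- the complement
  let P := LinearMap.ker l
  let π : (Fin m → Q) →ₗ[Q] P := LinearMap.codRestrict P
    (LinearMap.id - LinearMap.toSpanSingleton Q _ a ∘ₗ l) (fun v => by simp [P, hl])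
  have hπ : ∀ v, (π v : Fin m → Q) = v - l v • a := fun v => rfl
  have hπP : ∀ v : P, π v = v := fun v => by
    have : l v = 0 := v.2
    apply Subtype.ext; rw [hπ, this]; simp
  let e : (Fin m → Q) ≃ₗ[Q] Q × P := LinearEquiv.ofLinearMap (l.prod π)
    ((LinearMap.toSpanSingleton Q _ a).coprod P.subtype)
    (by
      apply LinearMap.ext
      rintro ⟨s, v⟩
      have : l v = 0 := v.2
      ext1
      · simp [hl, this]
      · apply Subtype.ext
        simp [hπ, hl, this])
    (by
      apply LinearMap.ext
      intro v
      simp [hπ])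
  have : Module.Finite Q P := Module.Finite.of_surjective π (fun v => ⟨v, hπP v⟩)
  have : Module.Projective Q P := Module.Projective.of_split P.subtype π
    (by ext1 v; exact hπP v)
  have : Module.Free Q P := Module.free_of_flat_of_isLocalRing
  have rP : Module.finrank Q P + 1 = m := by
    have := e.finrank_eq
    rw [Module.finrank_prod, Module.finrank_self, Module.finrank_fin_fun] at this
    omega
  let D1 : (Q × Q × P) →ₗ[Q] Q :=
    (LinearMap.toSpanSingleton Q Q x).coprod
      ((LinearMap.toSpanSingleton Q Q y).coprod (z • (d1 ∘ₗ P.subtype)))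
  have hD1 : ∀ p q v, D1 (p, q, v) = p * x + (q * y + z * d1 v) := fun p q v => by simp [D1]
  let δ : ((Fin (m + n - 1) → Q) × Q × Q) →ₗ[Q] (Fin m → Q) :=
    d2.coprod ((LinearMap.toSpanSingleton Q _ (-b)).coprod 0)
  have hδ : ∀ w t s, δ (w, t, s) = d2 w - t • b := fun w t s => by
    simp [δ, sub_eq_add_neg]
  let pt : ((Fin (m + n - 1) → Q) × Q × Q) →ₗ[Q] Q := LinearMap.fst Q Q Q ∘ₗ LinearMap.snd Q _ _
  let ps : ((Fin (m + n - 1) → Q) × Q × Q) →ₗ[Q] Q := LinearMap.snd Q Q Q ∘ₗ LinearMap.snd Q _ _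
  let D2 : ((Fin (m + n - 1) → Q) × Q × Q) →ₗ[Q] (Q × Q × P) :=
    (z • (l ∘ₗ δ) - y • ps).prod ((z • pt + x • ps).prod (π ∘ₗ δ))
  have hD2 : ∀ w t s, D2 (w, t, s) =
      (z * l (d2 w - t • b) - y * s, z * t + x * s, π (d2 w - t • b)) := fun w t s => by
    rw [← hδ w t s]; rfl
  let D3 : ((Fin n → Q) × Q) →ₗ[Q] ((Fin (m + n - 1) → Q) × Q × Q) :=
    (d3.coprod (LinearMap.toSpanSingleton Q _ w0)).prod
      ((x • LinearMap.snd Q _ _).prod (-z • LinearMap.snd Q _ _))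
  have hD3 : ∀ g t, D3 (g, t) = (d3 g + t • w0, x * t, -z * t) := fun g t => by simp [D3]
  have hinj := LinearMap.ker_eq_bot.mp H4
  refine format_of (E1 := Q × Q × P) (E2 := (Fin (m + n - 1) → Q) × Q × Q)
    (E3 := (Fin n → Q) × Q) _ ?_ ?_ ?_ D1 D2 D3 ?_ ?_ ?_ ?_ ?_ ?_ ?_
  · simp only [Module.finrank_prod, Module.finrank_self]; omega
  · simp only [Module.finrank_prod, Module.finrank_self, Module.finrank_fin_fun]; omega
  · simp only [Module.finrank_prod, Module.finrank_self, Module.finrank_fin_fun]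
  · apply le_antisymm
    · rintro _ ⟨⟨p, q, v⟩, rfl⟩
      rw [hD1, ← add_assoc]
      exact Submodule.add_mem_sup (Ideal.mem_span_pair.mpr ⟨p, q, rfl⟩)
        (Ideal.mul_mem_mul (Ideal.mem_span_singleton_self z) (hdI _))
    · rw [sup_le_iff]
      constructor
      · intro r hr
        obtain ⟨p, q, rfl⟩ := Ideal.mem_span_pair.mp hr
        exact ⟨(p, q, 0), by simp [hD1]⟩
      · intro r hr
        obtain ⟨i, hi, rfl⟩ := Ideal.mem_span_singleton_mul.mp hr
        rw [← H1] at hi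
        obtain ⟨v, rfl⟩ := hi
        refine ⟨(z * l v, 0, π v), ?_⟩
        rw [hD1, hπ, map_sub, map_smul, ha, smul_eq_mul]; ring
  · apply le_antisymm
    · rintro _ ⟨⟨w, t, s⟩, rfl⟩
      rw [LinearMap.mem_ker, hD2, hD1, hπ]
      simp only [map_sub, map_smul, ha, c1, hb, smul_eq_mul]; ring
    · rintro ⟨p, q, v⟩ hv
      rw [LinearMap.mem_ker, hD1] at hv
      obtain ⟨s, t, hst⟩ := hW.2.2 (d1 v) (-p) (-q) (by
        simp only [smul_eq_mul]; linear_combination hv)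
      simp only [smul_eq_mul] at hst
      -- d1 v = x s + y t
      have hk : (v : Fin m → Q) - s • a - t • b ∈ LinearMap.ker d1 := by
        simp only [LinearMap.mem_ker, map_sub, map_smul, ha, hb, hst, smul_eq_mul]; ring
      rw [← H2] at hk
      obtain ⟨w, hw⟩ := hk
      have hlv : l v = 0 := v.2
      -- x (p + z s) + y (q + z t) = 0
      have hs : x * (p + z * s) + y * (q + z * t) = 0 := by
        linear_combination hv - z * hst
      obtain ⟨c, hc⟩ := hW.2.1 (q + z * t) (-(p + z * s)) (by
        simp only [smul_eq_mul]; linear_combination hs)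
      simp only [smul_eq_mul] at hc
      have hp : p + z * s + y * c = 0 := hW.1 _ (by
        simp only [smul_eq_mul]; linear_combination hs - y * hc)
      refine ⟨(w, -t, c), ?_⟩
      have E : d2 w - (-t) • b = v - s • a := by rw [hw]; module
      rw [hD2, E]
      refine Prod.ext ?_ (Prod.ext ?_ ?_)
      · simp only [map_sub, map_smul, hlv, hl, smul_eq_mul]; linear_combination -hp
      · simp only; linear_combination -hc
      · apply Subtype.ext
        rw [hπ]
        simp only [map_sub, map_smul, hlv, hl, smul_eq_mul]; module
  · apply le_antisymm
    · rintro _ ⟨⟨g, t⟩, rfl⟩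
      rw [LinearMap.mem_ker, hD3, hD2]
      have E : d2 (d3 g + t • w0) - (x * t) • b = (-(t * y)) • a := by
        rw [map_add, c2, map_smul, hw0]; module
      rw [E]
      refine Prod.ext ?_ (Prod.ext ?_ ?_)
      · simp only [map_smul, hl, smul_eq_mul, Prod.fst_zero]; ring
      · simp only [Prod.fst_zero, Prod.snd_zero]; ring
      · apply Subtype.ext
        rw [hπ]
        simp only [map_smul, hl, smul_eq_mul, Prod.snd_zero, ZeroMemClass.coe_zero]; module
    · rintro ⟨w, t, s⟩ hv
      rw [LinearMap.mem_ker, hD2] at hv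
      have v1 := congrArg Prod.fst hv
      have v2 := congrArg (fun e => e.2.1) hv
      have v3 := congrArg (fun e => (e.2.2 : Fin m → Q)) hv
      simp only [Prod.fst_zero, Prod.snd_zero, hπ, ZeroMemClass.coe_zero] at v1 v2 v3
      set σ := l (d2 w - t • b) with hσ
      have v4 := congrArg d1 v3
      simp only [map_sub, map_smul, c1, ha, hb, smul_eq_mul, map_zero] at v4
      obtain ⟨t', ht'⟩ := hW.2.1 t (-σ) (by simp only [smul_eq_mul]; linear_combination -v4)
      simp only [smul_eq_mul] at ht'
      have hs' : σ + y * t' = 0 := hW.1 _ (by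
        simp only [smul_eq_mul]; linear_combination -v4 - y * ht')
      have hs : s + z * t' = 0 := hW.1 _ (by
        simp only [smul_eq_mul]; linear_combination v2 - z * ht')
      have hk : w - t' • w0 ∈ LinearMap.ker d2 := by
        rw [LinearMap.mem_ker, map_sub, map_smul, hw0]
        have : σ = -(y * t') := by linear_combination hs'
        rw [this, ht'] at v3
        linear_combination (norm := module) v3
      rw [← H3] at hk
      obtain ⟨g, hg⟩ := hk
      refine ⟨(g, t'), ?_⟩
      rw [hD3, hg]
      refine Prod.ext ?_ (Prod.ext ?_ ?_)
      · simp
      · exact ht'.symm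
      · simp only; linear_combination -hs
  · rw [LinearMap.ker_eq_bot']
    rintro ⟨g, t⟩ hv
    rw [hD3] at hv
    have v1 := congrArg Prod.fst hv
    have v2 := congrArg (fun e => e.2.1) hv
    simp only [Prod.fst_zero, Prod.snd_zero] at v1 v2
    have ht : t = 0 := hW.1 t v2
    subst ht
    rw [zero_smul, add_zero] at v1
    have : g = 0 := hinj (by rw [v1, map_zero])
    rw [this]; rfl
  · rw [sup_le_iff]
    constructor
    · rw [Ideal.span_le]
      rintro _ (rfl | rfl)
      · exact xm
      · exact ym
    · exact Ideal.mul_le_right.trans H5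
  · rintro ⟨w, t, s⟩
    rw [hD2]
    have A : ∀ q ∈ maximalIdeal Q, q ∈ maximalIdeal Q • (⊤ : Submodule Q Q) := fun q hq => by
      simpa using hq
    have B : d2 w - t • b ∈ maximalIdeal Q • (⊤ : Submodule Q (Fin m → Q)) :=
      Submodule.sub_mem _ (H6 ⟨w, rfl⟩)
        (Submodule.smul_mem _ _ (Submodule.smul_mem_smul um trivial))
    have K1 := smul_top_map (maximalIdeal Q) (LinearMap.inl Q Q (Q × P)) (A _
      (sub_mem (Ideal.mul_mem_right (l (d2 w - t • b)) _ zm) (Ideal.mul_mem_right s _ ym)))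
    have K2 := smul_top_map (maximalIdeal Q) (LinearMap.inr Q Q (Q × P) ∘ₗ LinearMap.inl Q Q P) (A _
      (add_mem (Ideal.mul_mem_right t _ zm) (Ideal.mul_mem_right s _ xm)))
    have K3 := smul_top_map (maximalIdeal Q)
      (LinearMap.inr Q Q (Q × P) ∘ₗ LinearMap.inr Q Q P ∘ₗ π) B
    have K := add_mem (add_mem K1 K2) K3
    simpa using K
  · rintro ⟨g, t⟩
    rw [hD3]
    have A : ∀ q ∈ maximalIdeal Q, q ∈ maximalIdeal Q • (⊤ : Submodule Q Q) := fun q hq => by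
      simpa using hq
    have B : d3 g + t • w0 ∈ maximalIdeal Q • (⊤ : Submodule Q (Fin (m + n - 1) → Q)) :=
      Submodule.add_mem _ (H7 ⟨g, rfl⟩)
        (Submodule.smul_mem _ _ (Submodule.smul_mem_smul um trivial))
    have K1 := smul_top_map (maximalIdeal Q) (LinearMap.inl Q (Fin (m + n - 1) → Q) (Q × Q)) B
    have K2 := smul_top_map (maximalIdeal Q)
      (LinearMap.inr Q (Fin (m + n - 1) → Q) (Q × Q) ∘ₗ LinearMap.inl Q Q Q) (A _
      (Ideal.mul_mem_right t _ xm))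
    have K3 := smul_top_map (maximalIdeal Q)
      (LinearMap.inr Q (Fin (m + n - 1) → Q) (Q × Q) ∘ₗ LinearMap.inr Q Q Q) (A _
      (Ideal.mul_mem_right t _ (neg_mem zm)))
    have K := add_mem (add_mem K1 K2) K3
    simpa using K
end

section
open IsLocalRing RingTheory.Sequence
variable {Q : Type*} [CommRing Q]

lemma ofList_one (x : Q) : Ideal.ofList [x] = Ideal.span {x} := by simp

lemma ofList_two (x y : Q) : Ideal.ofList [x, y] = Ideal.span {x, y} := by
  simp [Ideal.span_insert]

lemma WR3_of_regular {x y z : Q} (h : IsRegular Q [x, y, z]) : WR3 x y z Q := by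
  have h0 := h.regular_mod_prev 0 (by simp)
  have h1 := h.regular_mod_prev 1 (by simp)
  have h2 := h.regular_mod_prev 2 (by simp)
  rw [isSMulRegular_quotient_iff_mem_of_smul_mem] at h0 h1 h2
  simp only [List.take_zero, List.take_succ_cons, List.getElem_cons_zero, List.getElem_cons_succ,
    Ideal.ofList_nil, ofList_one, ofList_two, smul_eq_mul, Ideal.mul_top] at h0 h1 h2
  refine ⟨fun c hc => ?_, fun c u hc => ?_, fun c u v hc => ?_⟩
  · simpa using h0 c (by simpa using hc)
  · obtain ⟨w, hw⟩ := Ideal.mem_span_singleton'.mp (h1 c (Ideal.mem_span_singleton'.mpr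
      ⟨u, by simp only [smul_eq_mul] at hc; rw [hc, mul_comm]⟩))
    exact ⟨w, by rw [← hw, smul_eq_mul, mul_comm]⟩
  · obtain ⟨p, q, hw⟩ := Ideal.mem_span_pair.mp (h2 c (Ideal.mem_span_pair.mpr
      ⟨u, v, by simp only [smul_eq_mul] at hc; rw [hc]; ring⟩))
    exact ⟨p, q, by rw [← hw, smul_eq_mul, smul_eq_mul]; ring⟩

lemma regular_of_WR3 [IsLocalRing Q] {x y z : Q} (h : WR3 x y z Q) (hx : x ∈ maximalIdeal Q)
    (hy : y ∈ maximalIdeal Q) (hz : z ∈ maximalIdeal Q) : IsRegular Q [x, y, z] := by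
  refine ⟨⟨fun i hi => ?_⟩, ?_⟩
  · rw [isSMulRegular_quotient_iff_mem_of_smul_mem]
    have hi' : i < 3 := hi
    intro c hc
    interval_cases i <;>
    simp only [List.take_zero, List.take_succ_cons, List.getElem_cons_zero,
      List.getElem_cons_succ, Ideal.ofList_nil, ofList_one, ofList_two, smul_eq_mul, Ideal.mul_top] at hc ⊢
    · simpa using h.1 c (by simpa using hc)
    · obtain ⟨u, hu⟩ := Ideal.mem_span_singleton'.mp hc
      obtain ⟨w, hw⟩ := h.2.1 c u (by simp only [smul_eq_mul]; rw [← hu, mul_comm])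
      exact Ideal.mem_span_singleton'.mpr ⟨w, by rw [hw, smul_eq_mul, mul_comm]⟩
    · obtain ⟨u, v, hu⟩ := Ideal.mem_span_pair.mp hc
      obtain ⟨p, q, hw⟩ := h.2.2 c u v (by simp only [smul_eq_mul]; rw [← hu]; ring)
      exact Ideal.mem_span_pair.mpr ⟨p, q, by rw [hw, smul_eq_mul, smul_eq_mul]; ring⟩
  · intro htop
    have hle : Ideal.ofList [x, y, z] ≤ maximalIdeal Q := by
      rw [Ideal.span_le]
      intro r hr
      simp only [List.mem_cons, List.not_mem_nil, or_false, Set.mem_ofPred_eq] at hr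
      rcases hr with rfl | rfl | rfl <;> assumption
    rw [smul_eq_mul, Ideal.mul_top] at htop
    have h2 : (1 : Q) ∈ maximalIdeal Q := hle (by rw [← htop]; trivial)
    exact (Ideal.ne_top_iff_one _).mp (maximalIdeal.isMaximal Q).ne_top h2

lemma choose_seq [IsLocalRing Q] [IsNoetherianRing Q] {I : Ideal Q} (hI : I ≤ maximalIdeal Q)
    {z u t : Q} (hz : z ∈ I) (hu : u ∈ I) (ht : t ∈ I) (h : WR3 z u t Q) :
    ∃ x ∈ I, x ∉ maximalIdeal Q • I ∧ WR3 x (u * u) z Q := by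
  obtain ⟨w1, w2, w3⟩ := h
  simp only [smul_eq_mul] at w1 w2 w3
  set K : Ideal Q := Ideal.span {z, u * u} with hK
  have key : ∃ x ∈ I, x ∉ maximalIdeal Q • I ∧ ∀ p ∈ associatedPrimes Q (Q ⧸ K), x ∉ p := by
    by_contra hcon
    push Not at hcon
    have hsub : (I : Set Q) ⊆ ⋃ p ∈ insert (maximalIdeal Q • I) (associatedPrimes Q (Q ⧸ K)),
        (id p : Ideal Q) := by
      intro r hr
      by_cases hr' : r ∈ maximalIdeal Q • I
      · exact Set.mem_biUnion (Set.mem_insert _ _) hr'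
      · obtain ⟨p, hp, hrp⟩ := hcon r hr hr'
        exact Set.mem_biUnion (Set.mem_insert_of_mem _ hp) hrp
    rw [Ideal.subset_union_prime_finite ((associatedPrimes.finite Q (Q ⧸ K)).insert _)
      (maximalIdeal Q • I) (maximalIdeal Q • I)] at hsub
    · obtain ⟨p, hp, hle⟩ := hsub
      rcases hp with rfl | hp
      · have hbot := Submodule.eq_bot_of_le_smul_of_le_jacobson_bot (maximalIdeal Q) I
          (IsNoetherian.noetherian I) hle (maximalIdeal_le_jacobson _)
        rw [hbot] at hz
        have : z = 0 := hz
        have h10 : (1 : Q) = 0 := w1 1 (by simp [this])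
        exact one_ne_zero h10
      · have htp : t ∈ ⋃ p ∈ associatedPrimes Q (Q ⧸ K), (p : Set Q) :=
          Set.mem_biUnion hp (hle ht)
        rw [biUnion_associatedPrimes_eq_zero_divisors] at htp
        obtain ⟨a, ha, hta⟩ := htp
        obtain ⟨a, rfl⟩ := Ideal.Quotient.mk_surjective a
        apply ha
        have hta' : t * a ∈ K := by
          rw [← Ideal.Quotient.eq_zero_iff_mem]; exact hta
        rw [Ideal.Quotient.eq_zero_iff_mem]
        obtain ⟨p1, q1, e1⟩ := Ideal.mem_span_pair.mp hta'
        obtain ⟨p2, q2, e2⟩ := w3 a p1 (u * q1) (by rw [← e1]; ring)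
        obtain ⟨p3, e3⟩ := w2 (t * q2 - u * q1) (p1 - t * p2) (by
          linear_combination -e1 - t * e2)
        obtain ⟨p4, q4, e4⟩ := w3 q2 p3 q1 (by linear_combination e3)
        exact Ideal.mem_span_pair.mpr ⟨p2 + u * p4, q4, by
          rw [e2, e4]; ring⟩
    · intro p hp hne _
      rcases hp with rfl | hp
      · exact absurd rfl hne
      · exact hp.isPrime
  obtain ⟨x, hx, hx', hxp⟩ := key
  refine ⟨x, hx, hx', ?_⟩
  have hxr : ∀ a, x * a ∈ K → a ∈ K := by
    intro a ha
    by_contra hna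
    have : x ∈ ⋃ p ∈ associatedPrimes Q (Q ⧸ K), (p : Set Q) := by
      rw [biUnion_associatedPrimes_eq_zero_divisors]
      refine ⟨Ideal.Quotient.mk K a, by rwa [Ne, Ideal.Quotient.eq_zero_iff_mem], ?_⟩
      have := Ideal.Quotient.eq_zero_iff_mem.mpr ha
      exact this
    simp only [Set.mem_iUnion] at this
    obtain ⟨p, hp, hxp'⟩ := this
    exact hxp p hp hxp'
  have W : WR3 z (u * u) x Q := by
    refine ⟨w1, fun c w hc => ?_, fun c p q hc => ?_⟩
    · simp only [smul_eq_mul] at hc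
      obtain ⟨w', hw'⟩ := w2 (u * c) w (by linear_combination hc)
      exact w2 c w' hw'
    · simp only [smul_eq_mul] at hc
      obtain ⟨p, q, e⟩ := Ideal.mem_span_pair.mp (hxr c (Ideal.mem_span_pair.mpr
        ⟨p, q, by rw [hc]; ring⟩))
      exact ⟨p, q, by rw [← e, smul_eq_mul, smul_eq_mul]; ring⟩
  have R := regular_of_WR3 W (hI hz) (Ideal.mul_mem_left _ _ (hI hu)) (hI hx)
  exact WR3_of_regular (IsLocalRing.isRegular_of_perm R
    (((List.Perm.swap (u * u) z [x]).trans ((List.Perm.swap x z []).cons _)).trans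
      (List.Perm.swap x (u * u) [z])))

lemma mem_span_triple' {x y z a : Q} :
    a ∈ Ideal.span {x, y, z} ↔ ∃ p q t, a = x * p + y * q + z * t := by
  rw [Ideal.mem_span_insert]
  constructor
  · rintro ⟨p, b, hb, rfl⟩
    obtain ⟨q, t, rfl⟩ := Ideal.mem_span_pair.mp hb
    exact ⟨p, q, t, by ring⟩
  · rintro ⟨p, q, t, rfl⟩
    exact ⟨p, y * q + z * t, Ideal.mem_span_pair.mpr ⟨q, t, by ring⟩, by ring⟩
end

/-- **Corollary 1.3(a).** Let `Q` be a commutative Noetherian local ring and `I ⊆ Q` a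
grade `3` perfect ideal of resolution format `(1, m, m+n-1, n)`.  If `m ≥ 4`, then there
exists a grade `3` perfect ideal of resolution format `(1, m+1, m+n+1, n+1)` that is
linked to `I`. -/
theorem stmt_4 (Q : Type*) [CommRing Q] [IsNoetherianRing Q] [IsLocalRing Q]
    (I : Ideal Q) (m n : ℕ) (hI : IsGrade3PerfectOfFormat I m n) (hm : 4 ≤ m) :
    ∃ J : Ideal Q, IsGrade3PerfectOfFormat J (m + 1) (n + 1) ∧ Linked I J := by
  obtain ⟨⟨z, u, t, hz, hu, ht, hreg⟩, hm3, hn, hF⟩ := hI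
  have hF' := hF
  obtain ⟨d1, d2, d3, H1, H2, H3, H4, H5, -, -⟩ := hF'
  obtain ⟨x, hx, hx', hW⟩ := choose_seq H5 hz hu ht (WR3_of_regular hreg)
  set y := u * u with hy
  have hyI : y ∈ I := Ideal.mul_mem_left _ _ hu
  have hW2 : WR3 x y (z * z) Q := by
    refine ⟨hW.1, hW.2.1, fun c p q hc => ?_⟩
    obtain ⟨p', q', h'⟩ := hW.2.2 (z * c) p q (by
      simp only [smul_eq_mul] at hc ⊢; linear_combination hc)
    exact hW.2.2 c p' q' h'
  have xm := H5 hx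
  have ym := H5 hyI
  have zm := H5 hz
  have R1 := regular_of_WR3 hW xm ym zm
  have R2 := regular_of_WR3 hW2 xm ym (Ideal.mul_mem_left _ _ zm)
  have hdual : ∀ r, (∀ j, (∀ i ∈ I, j * i ∈ Ideal.span {x, y, z}) →
      r * j ∈ Ideal.span {x, y, z}) → r ∈ I := by
    intro r hr
    simp only [mem_span_triple'] at hr
    rw [← H1] at hr hx hyI hz ⊢
    exact double_colon (Pi.basisFun Q _) (Pi.basisFun Q _) (Pi.basisFun Q _) d1 d2 d3 H2 H3 H4 hW
      hx hyI hz r hr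
  let J0 : Ideal Q := Submodule.colon (Ideal.span {x, y, z}) (I : Set Q)
  let J : Ideal Q := Ideal.span {x, y} ⊔ Ideal.span {z} * I
  have hxJ0 : x ∈ J0 := Submodule.mem_colon.mpr fun i _ =>
    Ideal.mul_mem_right _ _ (Ideal.subset_span (by simp))
  have hyJ0 : y ∈ J0 := Submodule.mem_colon.mpr fun i _ =>
    Ideal.mul_mem_right _ _ (Ideal.subset_span (by simp))
  have hzJ0 : z ∈ J0 := Submodule.mem_colon.mpr fun i _ =>
    Ideal.mul_mem_right _ _ (Ideal.subset_span (by simp))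
  have hxJ : x ∈ J := Ideal.mem_sup_left (Ideal.subset_span (by simp))
  have hyJ : y ∈ J := Ideal.mem_sup_left (Ideal.subset_span (by simp))
  have hzJ : z * z ∈ J :=
    Ideal.mem_sup_right (Ideal.mul_mem_mul (Ideal.mem_span_singleton_self z) hz)
  have L1 : DirectlyLinked I J0 := ⟨x, y, z, hx, hyI, hz, R1, rfl⟩
  have L2 : DirectlyLinked J0 J := by
    refine ⟨x, y, z * z, hxJ0, hyJ0, Ideal.mul_mem_left _ _ hzJ0, R2, ?_⟩
    apply le_antisymm
    · rw [sup_le_iff]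
      constructor
      · rw [Ideal.span_le]
        rintro _ (rfl | rfl)
        · exact Submodule.mem_colon.mpr fun i _ =>
            Ideal.mul_mem_right _ _ (Ideal.subset_span (by simp))
        · exact Submodule.mem_colon.mpr fun i _ =>
            Ideal.mul_mem_right _ _ (Ideal.subset_span (by simp))
      · intro r hr
        obtain ⟨i, hi, rfl⟩ := Ideal.mem_span_singleton_mul.mp hr
        refine Submodule.mem_colon.mpr fun j hj => ?_
        obtain ⟨p, q, t, h⟩ := mem_span_triple'.mp (Submodule.mem_colon.mp hj i hi)
        rw [smul_eq_mul] at h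
        rw [mem_span_triple']
        exact ⟨z * p, z * q, t, by rw [smul_eq_mul]; linear_combination z * h⟩
    · intro r hr
      rw [Submodule.mem_colon] at hr
      obtain ⟨p, q, s, h⟩ := mem_span_triple'.mp (hr z hzJ0)
      rw [smul_eq_mul] at h
      obtain ⟨p1, q1, h1⟩ := hW.2.2 (r - z * s) p q (by
        simp only [smul_eq_mul]; linear_combination h)
      simp only [smul_eq_mul] at h1
      have hs : s ∈ I := hdual s fun j hj => by
        obtain ⟨p2, q2, t2, h2⟩ := mem_span_triple'.mp (hr j (Submodule.mem_colon.mpr hj))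
        rw [smul_eq_mul] at h2
        obtain ⟨p3, q3, h3⟩ := hW.2.2 (s * j - z * t2) (p2 - p1 * j) (q2 - q1 * j) (by
          simp only [smul_eq_mul]; linear_combination h2 - j * h1)
        simp only [smul_eq_mul] at h3
        exact mem_span_triple'.mpr ⟨p3, q3, t2, by linear_combination h3⟩
      have hr' : r = (p1 * x + q1 * y) + z * s := by linear_combination h1
      rw [hr']
      exact Submodule.add_mem_sup (Ideal.mem_span_pair.mpr ⟨p1, q1, rfl⟩)
        (Ideal.mul_mem_mul (Ideal.mem_span_singleton_self z) hs)
  refine ⟨J, ⟨⟨x, y, z * z, hxJ, hyJ, hzJ, R2⟩, by omega, by omega,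
    new_format hF (by omega) hx hx' hu hz hW⟩, ?_⟩
  exact (Relation.ReflTransGen.single L1).tail L2
end

section
/- Let (Q, 𝔫, k) be a commutative Noetherian local ring and I ⊆ Q a grade 3 perfect ideal of resolution format (1, m, m+n−1, n). If m ≥ 5, then there exists a grade 3 perfect ideal of resolution format (1, m, m+n, n+1) that is linked to I. -/
open IsLocalRing RingTheory.Sequence

lemma coset_avoid {R : Type*} [CommRing R] (v : R) (N : ℕ) : ∀ (S : Finset (Ideal R)), S.card = N →
    (∀ P ∈ S, P.IsPrime ∧ v ∉ P) → ∀ e : R, ∃ s, ∀ P ∈ S, e + v * s ∉ P := by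
  classical
  induction N with
  | zero =>
    intro S hS _ e
    rw [Finset.card_eq_zero] at hS
    subst hS
    exact ⟨0, by simp⟩
  | succ N ih =>
    intro S hS hP e
    have hne : S.Nonempty := by
      rw [← Finset.card_pos]; omega
    obtain ⟨P, hmin⟩ := S.exists_minimal hne
    have hPS := hmin.prop
    obtain ⟨s, hs⟩ := ih (S.erase P) (by rw [Finset.card_erase_of_mem hPS]; omega)
      (fun P' h => hP P' (Finset.mem_of_mem_erase h)) e
    by_cases hmem : e + v * s ∈ P
    · have := (hP P hPS).1
      have hnot : ¬ (S.erase P).inf id ≤ P := by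
        rw [Ideal.IsPrime.inf_le' this]
        rintro ⟨P', h1, h2⟩
        have h3 := hmin.le_of_le (Finset.mem_of_mem_erase h1) h2
        exact (Finset.ne_of_mem_erase h1) (le_antisymm h2 h3)
      obtain ⟨s', hs', hs'P⟩ := Set.not_subset.mp hnot
      refine ⟨s + s', fun P' hP' => ?_⟩
      have e1 : e + v * (s + s') = (e + v * s) + v * s' := by ring
      rw [e1]
      by_cases h : P' = P
      · subst h
        rw [Ideal.add_mem_iff_right _ hmem]
        intro h'
        rcases this.mem_or_mem h' with h' | h'
        · exact (hP _ hPS).2 h'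
        · exact hs'P h'
      · have h1 : P' ∈ S.erase P := Finset.mem_erase.mpr ⟨h, hP'⟩
        have h2 : s' ∈ P' := (Finset.inf_le (f := id) h1) hs'
        rw [Ideal.add_mem_iff_left _ (P'.mul_mem_left _ h2)]
        exact hs P' h1
    · refine ⟨s, fun P' hP' => ?_⟩
      by_cases h : P' = P
      · subst h; exact hmem
      · exact hs P' (Finset.mem_erase.mpr ⟨h, hP'⟩)

/-- nonzerodivisor mod an ideal -/
lemma exists_reg_mod {R : Type*} [CommRing R] [IsNoetherianRing R] (K : Ideal R) (v e : R)
    (hv : ∀ a, v * a ∈ K → a ∈ K) : ∃ s, ∀ a, (e + v * s) * a ∈ K → a ∈ K := by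
  have hfin := associatedPrimes.finite R (R ⧸ K)
  have hU := biUnion_associatedPrimes_eq_compl_regular R (R ⧸ K)
  have key : ∀ r : R, IsSMulRegular (R ⧸ K) r ↔ ∀ a, r * a ∈ K → a ∈ K := fun r => by
    simpa using isSMulRegular_quotient_iff_mem_of_smul_mem K r
  have h1 : ∀ r : R, IsSMulRegular (R ⧸ K) r ↔ ∀ P ∈ associatedPrimes R (R ⧸ K), r ∉ P := by
    intro r
    have := Set.ext_iff.mp hU r
    simp only [Set.mem_iUnion, Set.mem_compl_iff, SetLike.mem_coe] at this
    constructor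
    · intro h P hP hr
      exact (this.mp ⟨P, hP, hr⟩) h
    · intro h
      by_contra h'
      obtain ⟨P, hP, hr⟩ := this.mpr h'
      exact h P hP hr
  obtain ⟨s, hs⟩ := coset_avoid v _ hfin.toFinset rfl (fun P hP => by
    rw [Set.Finite.mem_toFinset] at hP
    exact ⟨hP.isPrime, (h1 v).mp ((key v).mpr hv) P hP⟩) e
  exact ⟨s, (key _).mp ((h1 _).mpr fun P hP => hs P (by simpa using hP))⟩

def Reg3 {R : Type*} [CommRing R] [IsLocalRing R] (x y z : R) : Prop :=
  (∀ a, x * a = 0 → a = 0) ∧ (∀ a, y * a ∈ Ideal.span {x} → a ∈ Ideal.span {x}) ∧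
  (∀ a, z * a ∈ Ideal.span {x, y} → a ∈ Ideal.span {x, y}) ∧
  x ∈ maximalIdeal R ∧ y ∈ maximalIdeal R ∧ z ∈ maximalIdeal R

lemma reg3_iff {R : Type*} [CommRing R] [IsNoetherianRing R] [IsLocalRing R] (x y z : R) :
    IsRegular R [x, y, z] ↔ Reg3 x y z := by
  have hw : IsWeaklyRegular R [x, y, z] ↔ (∀ a, x * a = 0 → a = 0) ∧
      (∀ a, y * a ∈ Ideal.span {x} → a ∈ Ideal.span {x}) ∧
      (∀ a, z * a ∈ Ideal.span {x, y} → a ∈ Ideal.span {x, y}) := by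
    rw [isWeaklyRegular_iff_Fin]
    simp only [isSMulRegular_quotient_iff_mem_of_smul_mem]
    change (∀ i : Fin 3, _) ↔ _
    rw [Fin.forall_fin_succ, Fin.forall_fin_succ, Fin.forall_fin_succ]
    simp [Ideal.span_insert]
  constructor
  · intro h
    have hm : ∀ r ∈ [x, y, z], r ∈ maximalIdeal R := by
      intro r hr
      have h2 := h.top_ne_smul
      have : Ideal.ofList [x,y,z] ≤ maximalIdeal R := IsLocalRing.le_maximalIdeal (by
        intro h3; rw [h3] at h2; simp at h2)
      exact this (Ideal.subset_span hr)
    obtain ⟨h1, h2, h3⟩ := hw.mp h.toIsWeaklyRegular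
    exact ⟨h1, h2, h3, hm _ (by simp), hm _ (by simp), hm _ (by simp)⟩
  · rintro ⟨h1, h2, h3, h4, h5, h6⟩
    rw [IsLocalRing.isRegular_iff_isWeaklyRegular_of_subset_maximalIdeal]
    · exact hw.mpr ⟨h1, h2, h3⟩
    · intro r hr
      simp at hr
      rcases hr with rfl | rfl | rfl <;> assumption

lemma Reg3.rot {R : Type*} [CommRing R] [IsNoetherianRing R] [IsLocalRing R] {x y z : R}
    (h : Reg3 x y z) : Reg3 z x y := by
  rw [← reg3_iff] at h ⊢
  exact IsLocalRing.isRegular_of_perm h (by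
    have := List.perm_append_comm (l₁ := [x, y]) (l₂ := [z]); simpa using this)

lemma Reg3.swap {R : Type*} [CommRing R] [IsNoetherianRing R] [IsLocalRing R] {x y z : R}
    (h : Reg3 x y z) : Reg3 x z y := by
  rw [← reg3_iff] at h ⊢
  exact IsLocalRing.isRegular_of_perm h (List.Perm.cons _ (List.Perm.swap _ _ _))

lemma Reg3.modify {R : Type*} [CommRing R] [IsNoetherianRing R] [IsLocalRing R] {x y z : R}
    (h : Reg3 x y z) {I : Ideal R} (hI : I ≤ maximalIdeal R) (hz : z ∈ I) (e : R) (he : e ∈ I) :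
    ∃ η ∈ maximalIdeal R * I, Reg3 x y (e + η) := by
  obtain ⟨h1, h2, h3, h4, h5, h6⟩ := h
  obtain ⟨s, hs⟩ := exists_reg_mod (Ideal.span {x, y}) (z * z) e
    (fun a ha => h3 _ (h3 _ (by rwa [← mul_assoc])))
  have : z * z * s ∈ maximalIdeal R * I := Ideal.mul_mem_right _ _ (Ideal.mul_mem_mul h6 hz)
  exact ⟨z * z * s, this, h1, h2, hs, h4, h5, add_mem (hI he) (Ideal.mul_le_right (I := maximalIdeal R) this |> fun h => hI h)⟩

lemma exists_reg3 {R : Type*} [CommRing R] [IsNoetherianRing R] [IsLocalRing R] {x y z : R}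
    (h : Reg3 x y z) {I : Ideal R} (hI : I ≤ maximalIdeal R) (hx : x ∈ I) (hy : y ∈ I) (hz : z ∈ I)
    (a b c : R) (ha : a ∈ I) (hb : b ∈ I) (hc : c ∈ I) :
    ∃ u ∈ maximalIdeal R * I, ∃ v ∈ maximalIdeal R * I, ∃ w ∈ maximalIdeal R * I,
      Reg3 (a + u) (b + v) (c + w) := by
  obtain ⟨u, hu, h1⟩ := h.modify hI hz a ha
  obtain ⟨v, hv, h2⟩ := h1.rot.modify hI hy b hb
  obtain ⟨w, hw, h3⟩ := h2.swap.modify hI hx c hc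
  exact ⟨u, hu, v, hv, w, hw, h3⟩

lemma mem_smul_top_pi {R : Type*} [CommRing R] (I : Ideal R) {r : ℕ} (v : Fin r → R) :
    v ∈ I • (⊤ : Submodule R (Fin r → R)) ↔ ∀ i, v i ∈ I := by
  constructor
  · intro h
    refine Submodule.smul_induction_on h ?_ ?_
    · intro a ha n _ i
      exact I.mul_mem_right _ ha
    · intro x y hx hy i
      exact add_mem (hx i) (hy i)
  · intro h
    rw [pi_eq_sum_univ' v]
    exact Submodule.sum_mem _ fun i _ => Submodule.smul_mem_smul (h i) trivial

set_option linter.unusedSectionVars false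
set_option linter.unusedVariables false

section cx
variable {Q : Type*} [CommRing Q] [IsNoetherianRing Q] [IsLocalRing Q]

lemma Reg3.v1 {x y z : Q} (h : Reg3 x y z) {r : ℕ} {v : Fin r → Q} (hv : x • v = 0) : v = 0 := by
  funext i
  exact h.1 _ (congrFun hv i)

lemma Reg3.v2 {x y z : Q} (h : Reg3 x y z) {r : ℕ} {v u : Fin r → Q} (hv : y • v = x • u) :
    ∃ c, v = x • c := by
  have : ∀ i, ∃ c, v i = x * c := fun i => by
    have := h.2.1 (v i) (Ideal.mem_span_singleton.mpr ⟨u i, congrFun hv i⟩)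
    exact Ideal.mem_span_singleton.mp this
  choose c hc using this
  exact ⟨c, funext hc⟩

lemma Reg3.v3 {x y z : Q} (h : Reg3 x y z) {r : ℕ} {v a b : Fin r → Q}
    (hv : z • v = x • a + y • b) : ∃ c d, v = x • c + y • d := by
  have : ∀ i, ∃ c d, c * x + d * y = v i := fun i => by
    have := h.2.2.1 (v i) (Ideal.mem_span_pair.mpr ⟨a i, b i, by
      have := congrFun hv i
      simp at this
      rw [this]; ring⟩)
    exact Ideal.mem_span_pair.mp this
  choose c d hc using this
  exact ⟨c, d, funext fun i => by simp [← hc i, mul_comm]⟩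

variable {m r n : ℕ} {d1 : (Fin m → Q) →ₗ[Q] Q} {d2 : (Fin r → Q) →ₗ[Q] (Fin m → Q)}
    {d3 : (Fin n → Q) →ₗ[Q] (Fin r → Q)}

lemma exists_kos (h21 : LinearMap.range d2 = LinearMap.ker d1) (a b : Fin m → Q) :
    ∃ f, d2 f = d1 a • b - d1 b • a := by
  have : d1 a • b - d1 b • a ∈ LinearMap.range d2 := by
    rw [h21]; simp [mul_comm]
  exact this

lemma exists_w (h21 : LinearMap.range d2 = LinearMap.ker d1)
    (h32 : LinearMap.range d3 = LinearMap.ker d2) {e1 e2 e3 : Fin m → Q} {f12 f13 f23 : Fin r → Q}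
    (h12 : d2 f12 = d1 e1 • e2 - d1 e2 • e1)
    (h13 : d2 f13 = d1 e1 • e3 - d1 e3 • e1)
    (h23 : d2 f23 = d1 e2 • e3 - d1 e3 • e2) :
    ∃ w, d3 w = d1 e1 • f23 - d1 e2 • f13 + d1 e3 • f12 := by
  have : d1 e1 • f23 - d1 e2 • f13 + d1 e3 • f12 ∈ LinearMap.range d3 := by
    rw [h32, LinearMap.mem_ker]
    simp only [map_add, map_sub, map_smul, h12, h13, h23]
    module
  exact this

lemma w_mem (h21 : LinearMap.range d2 = LinearMap.ker d1)
    (h32 : LinearMap.range d3 = LinearMap.ker d2) (h3 : LinearMap.ker d3 = ⊥)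
    {e1 e2 e3 : Fin m → Q} {f12 f13 f23 : Fin r → Q}
    (h12 : d2 f12 = d1 e1 • e2 - d1 e2 • e1)
    (h13 : d2 f13 = d1 e1 • e3 - d1 e3 • e1)
    (h23 : d2 f23 = d1 e2 • e3 - d1 e3 • e2) {w : Fin n → Q}
    (hw : d3 w = d1 e1 • f23 - d1 e2 • f13 + d1 e3 • f12) (a : Fin m → Q) :
    ∃ k1 k2 k3, d1 a • w = d1 e1 • k1 + d1 e2 • k2 + d1 e3 • k3 := by
  obtain ⟨fa1, ha1⟩ := exists_kos h21 a e1
  obtain ⟨fa2, ha2⟩ := exists_kos h21 a e2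
  obtain ⟨fa3, ha3⟩ := exists_kos h21 a e3
  obtain ⟨k1, hk1⟩ := exists_w h21 h32 ha2 ha3 h23
  obtain ⟨k2, hk2⟩ := exists_w h21 h32 ha1 ha3 h13
  obtain ⟨k3, hk3⟩ := exists_w h21 h32 ha1 ha2 h12
  refine ⟨k1, -k2, k3, ?_⟩
  apply LinearMap.ker_eq_bot.mp h3
  simp only [map_add, map_neg, map_smul, hk1, hk2, hk3, hw]
  module

lemma of_w (h21 : LinearMap.range d2 = LinearMap.ker d1)
    (h32 : LinearMap.range d3 = LinearMap.ker d2)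
    {e1 e2 e3 : Fin m → Q} {f12 f13 f23 : Fin r → Q}
    (h12 : d2 f12 = d1 e1 • e2 - d1 e2 • e1)
    (h13 : d2 f13 = d1 e1 • e3 - d1 e3 • e1)
    (h23 : d2 f23 = d1 e2 • e3 - d1 e3 • e2) {w : Fin n → Q}
    (hw : d3 w = d1 e1 • f23 - d1 e2 • f13 + d1 e3 • f12)
    (hreg : Reg3 (d1 e1) (d1 e2) (d1 e3)) {s : Q} {k1 k2 k3 : Fin n → Q}
    (hs : s • w = d1 e1 • k1 + d1 e2 • k2 + d1 e3 • k3) : ∃ c, d1 c = s := by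
  have c12 : ∀ f, d1 (d2 f) = 0 := fun f => by
    have : d2 f ∈ LinearMap.ker d1 := h21 ▸ ⟨f, rfl⟩
    exact this
  have c23 : ∀ f, d2 (d3 f) = 0 := fun f => by
    have : d3 f ∈ LinearMap.ker d2 := h32 ▸ ⟨f, rfl⟩
    exact this
  have hs' := congrArg d3 hs
  simp only [map_add, map_smul, hw] at hs'
  obtain ⟨C1, C2, hC⟩ := hreg.v3 (v := s • f12 - d3 k3) (a := - (s • f23 - d3 k1))
    (b := s • f13 + d3 k2) (by linear_combination (norm := module) hs')
  have h12' : d1 e1 • (s • e2 - d2 C1) = d1 e2 • (s • e1 + d2 C2) := by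
    have := congrArg d2 hC
    simp only [map_add, map_sub, map_smul, h12, c23] at this
    linear_combination (norm := module) this
  obtain ⟨c, hc⟩ := hreg.v2 h12'.symm
  refine ⟨c, ?_⟩
  have := congrArg d1 hc
  simp only [map_add, map_smul, c12, smul_eq_mul] at this
  have h0 := hreg.1 (d1 c - s) (by linear_combination - this)
  linear_combination h0

lemma linked_bdl (h21 : LinearMap.range d2 = LinearMap.ker d1)
    (h32 : LinearMap.range d3 = LinearMap.ker d2) (h3 : LinearMap.ker d3 = ⊥)
    (e1 e2 e3 : Fin m → Q) (hreg : Reg3 (d1 e1) (d1 e2) (d1 e3)) :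
    Linked (LinearMap.range d1 : Ideal Q)
      (Ideal.span {d1 e1, d1 e2} ⊔ Ideal.span {d1 e3} * (LinearMap.range d1 : Ideal Q)) := by
  obtain ⟨f12, h12⟩ := exists_kos h21 e1 e2
  obtain ⟨f13, h13⟩ := exists_kos h21 e1 e3
  obtain ⟨f23, h23⟩ := exists_kos h21 e2 e3
  obtain ⟨w, hw⟩ := exists_w h21 h32 h12 h13 h23
  have hwm := w_mem h21 h32 h3 h12 h13 h23 hw
  set I : Ideal Q := LinearMap.range d1 with hI
  set x := d1 e1 with hx
  set y := d1 e2 with hy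
  set z := d1 e3 with hz
  set J : Ideal Q := Submodule.colon (Ideal.span {x, y, z}) I with hJ
  have hmJ : ∀ j, j ∈ J ↔ ∀ p ∈ I, j * p ∈ Ideal.span {x, y, z} := fun j => by
    rw [hJ, Submodule.mem_colon]; rfl
  have hxI : x ∈ I := ⟨e1, rfl⟩
  have hyI : y ∈ I := ⟨e2, rfl⟩
  have hzI : z ∈ I := ⟨e3, rfl⟩
  have hKJ : Ideal.span {x, y, z} ≤ J := fun j hj => (hmJ j).mpr fun p _ => Ideal.mul_mem_right _ _ hj
  have hxJ : x ∈ J := hKJ (Ideal.subset_span (by simp))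
  have hyJ : y ∈ J := hKJ (Ideal.subset_span (by simp))
  have hzJ : z ∈ J := hKJ (Ideal.subset_span (by simp))
  have hD1 : DirectlyLinked I J :=
    ⟨x, y, z, hxI, hyI, hzI, (reg3_iff _ _ _).mpr hreg, rfl⟩
  obtain ⟨r1, r2, r3, r4, r5, r6⟩ := id hreg
  have hreg' : Reg3 x y (z * z) := ⟨r1, r2, fun a ha => r3 _ (r3 _ (by rwa [← mul_assoc])), r4, r5,
    Ideal.mul_mem_left _ _ r6⟩
  have hD2 : DirectlyLinked J (Ideal.span {x, y} ⊔ Ideal.span {z} * I) := by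
    refine ⟨x, y, z * z, hxJ, hyJ, J.mul_mem_left _ hzJ, (reg3_iff _ _ _).mpr hreg', ?_⟩
    have hle : Ideal.span {x, y} ≤ Ideal.span {x, y, z * z} := Ideal.span_mono (by
      intro a; simp; tauto)
    apply le_antisymm
    · refine sup_le ?_ ?_
      · intro a ha
        rw [Submodule.mem_colon]
        intro p _
        exact Ideal.mul_mem_right _ _ (hle ha)
      · rw [Ideal.mul_le]
        intro a ha i hi
        rw [Submodule.mem_colon]
        intro j hj
        obtain ⟨b, rfl⟩ := Ideal.mem_span_singleton.mp ha
        obtain ⟨p, q, t, ht⟩ := Submodule.mem_span_triple.mp ((hmJ j).mp hj i hi)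
        refine Submodule.mem_span_triple.mpr ⟨z * b * p, z * b * q, b * t, ?_⟩
        simp only [smul_eq_mul] at ht ⊢
        linear_combination z * b * ht
    · intro s hs
      rw [Submodule.mem_colon] at hs
      obtain ⟨a, b, c, habc⟩ := Submodule.mem_span_triple.mp (hs z hzJ)
      simp only [smul_eq_mul] at habc
      have h1 : s - c * z ∈ Ideal.span {x, y} := r3 _ (Ideal.mem_span_pair.mpr ⟨a, b, by
        linear_combination habc⟩)
      have h2 : ∀ j ∈ J, c * j ∈ Ideal.span {x, y, z} := by
        intro j hj
        obtain ⟨a', b', c', h'⟩ := Submodule.mem_span_triple.mp (hs j hj)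
        simp only [smul_eq_mul] at h'
        obtain ⟨p, q, hpq⟩ := Ideal.mem_span_pair.mp h1
        obtain ⟨p', q', h3⟩ := Ideal.mem_span_pair.mp
          (r3 (c * j - c' * z) (Ideal.mem_span_pair.mpr ⟨a' - p * j, b' - q * j, by
            linear_combination h' - j * hpq⟩))
        exact Submodule.mem_span_triple.mpr ⟨p', q', c', by
          simp only [smul_eq_mul]; linear_combination h3⟩
      have h3 : ∀ l, w l ∈ J := by
        intro l
        rw [hmJ]
        rintro p ⟨a, rfl⟩
        obtain ⟨k1, k2, k3, hk⟩ := hwm a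
        have := congrFun hk l
        simp at this
        exact Submodule.mem_span_triple.mpr ⟨k1 l, k2 l, k3 l, by
          simp only [smul_eq_mul]; linear_combination - this⟩
      have h4 : ∀ l, ∃ k1 k2 k3, c * w l = x * k1 + y * k2 + z * k3 := by
        intro l
        obtain ⟨p, q, t, h⟩ := Submodule.mem_span_triple.mp (h2 _ (h3 l))
        simp only [smul_eq_mul] at h
        exact ⟨p, q, t, by linear_combination -h⟩
      choose k1 k2 k3 hk using h4
      obtain ⟨c0, hc0⟩ := of_w h21 h32 h12 h13 h23 hw hreg (s := c) (k1 := k1) (k2 := k2) (k3 := k3)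
        (funext fun l => by simpa using hk l)
      have h5 : c * z ∈ Ideal.span {z} * I := by
        rw [mul_comm c z]
        exact Ideal.mul_mem_mul (Ideal.mem_span_singleton_self z) ⟨c0, hc0⟩
      have : s = (s - c * z) + c * z := by ring
      rw [this]
      exact Submodule.add_mem_sup h1 h5
  exact (Relation.ReflTransGen.single hD1).tail hD2

lemma pair_syz {x y z : Q} (h : Reg3 x y z) {c d : Q} (hcd : c * x + d * y = 0) :
    ∃ l, c = - (l * y) ∧ d = l * x := by
  obtain ⟨l, hl⟩ := Ideal.mem_span_singleton.mp
    (h.2.1 d (Ideal.mem_span_singleton.mpr ⟨-c, by linear_combination hcd⟩))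
  refine ⟨l, ?_, by rw [hl]; ring⟩
  have := h.1 (c + l * y) (by rw [hl] at hcd; linear_combination hcd)
  linear_combination this

lemma bdl_format (h21 : LinearMap.range d2 = LinearMap.ker d1)
    (h32 : LinearMap.range d3 = LinearMap.ker d2) (h3 : LinearMap.ker d3 = ⊥)
    (m2 : ∀ f i, d2 f i ∈ maximalIdeal Q) (m3 : ∀ f i, d3 f i ∈ maximalIdeal Q)
    (a b : Fin m → Q) (p q : (Fin m → Q) →ₗ[Q] Q) (pa : p a = 1) (pb : p b = 0)
    (qa : q a = 0) (qb : q b = 1) (z : Q) (hreg : Reg3 (d1 a) (d1 b) z)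
    (g : Fin r → Q) (hg : ∀ i, g i ∈ maximalIdeal Q) (hdg : d2 g = d1 a • b - d1 b • a) :
    ∃ (D1 : (Fin m → Q) →ₗ[Q] Q)
      (D2 : (Fin (r + 1) → Q) →ₗ[Q] (Fin m → Q))
      (D3 : (Fin (n + 1) → Q) →ₗ[Q] (Fin (r + 1) → Q)),
      LinearMap.range D1 = Ideal.span {d1 a, d1 b} ⊔ Ideal.span {z} * (LinearMap.range d1 : Ideal Q) ∧
      LinearMap.range D2 = LinearMap.ker D1 ∧
      LinearMap.range D3 = LinearMap.ker D2 ∧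
      LinearMap.ker D3 = ⊥ ∧
      (∀ f i, D2 f i ∈ maximalIdeal Q) ∧ (∀ f i, D3 f i ∈ maximalIdeal Q) := by
  have c12 : ∀ f, d1 (d2 f) = 0 := fun f => by
    have : d2 f ∈ LinearMap.ker d1 := h21 ▸ ⟨f, rfl⟩
    exact this
  have c23 : ∀ f, d2 (d3 f) = 0 := fun f => by
    have : d3 f ∈ LinearMap.ker d2 := h32 ▸ ⟨f, rfl⟩
    exact this
  have x12 : ∀ v, d1 v = 0 → ∃ f, d2 f = v := fun v hv => by
    have : v ∈ LinearMap.range d2 := h21 ▸ hv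
    exact this
  have x23 : ∀ v, d2 v = 0 → ∃ f, d3 f = v := fun v hv => by
    have : v ∈ LinearMap.range d3 := h32 ▸ hv
    exact this
  have i3 := LinearMap.ker_eq_bot.mp h3
  obtain ⟨r1, r2, r3, r4, r5, r6⟩ := id hreg
  set x := d1 a with hx
  set y := d1 b with hy
  let τ : (Fin m → Q) →ₗ[Q] (Fin m → Q) :=
    LinearMap.id + (z - 1) • (p.smulRight a + q.smulRight b)
  have hτ : ∀ v, τ v = v + (z - 1) • (p v • a + q v • b) := fun v => by simp [τ]
  let D1 : (Fin m → Q) →ₗ[Q] Q := z • d1 + (1 - z) • (x • p + y • q)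
  have hD1 : ∀ v, D1 v = z * d1 v + (1 - z) * (x * p v + y * q v) := fun v => by simp [D1]; ring
  let E2 : (Q × (Fin r → Q)) →ₗ[Q] (Fin m → Q) :=
    (LinearMap.toSpanSingleton Q _ (x • b - y • a)).coprod (τ ∘ₗ d2)
  have hE2 : ∀ l f, E2 (l, f) = l • (x • b - y • a) + τ (d2 f) := fun l f => by simp [E2]
  let E3 : (Q × (Fin n → Q)) →ₗ[Q] (Q × (Fin r → Q)) :=
    LinearMap.prod ((-z) • LinearMap.fst Q Q _)
      ((LinearMap.toSpanSingleton Q _ g).coprod d3)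
  have hE3 : ∀ l f, E3 (l, f) = (-z * l, l • g + d3 f) := fun l f => by simp [E3]
  have hD1a : D1 a = x := by rw [hD1, pa, qa]; ring
  have hD1b : D1 b = y := by rw [hD1, pb, qb]; ring
  have hD1τ : ∀ v, D1 (τ v) = z * d1 v := fun v => by
    rw [hτ]
    simp only [map_add, map_smul, smul_eq_mul, hD1a, hD1b]
    rw [hD1]; ring
  have R2 : LinearMap.range E2 = LinearMap.ker D1 := by
    apply le_antisymm
    · rintro _ ⟨⟨l, f⟩, rfl⟩
      rw [LinearMap.mem_ker, hE2]
      simp only [map_add, map_smul, map_sub, smul_eq_mul, hD1a, hD1b, hD1τ, c12]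
      ring
    · intro f hf
      rw [LinearMap.mem_ker, hD1] at hf
      obtain ⟨c, d, hcd⟩ := Ideal.mem_span_pair.mp (r3 (d1 (f - p f • a - q f • b))
        (Ideal.mem_span_pair.mpr ⟨- p f, - q f, by
          simp only [map_sub, map_smul, smul_eq_mul, ← hx, ← hy]; linear_combination -hf⟩))
      simp only [map_sub, map_smul, smul_eq_mul, ← hx, ← hy] at hcd
      obtain ⟨f2, hf2⟩ := x12 (f - p f • a - q f • b - c • a - d • b) (by
        simp only [map_sub, map_smul, smul_eq_mul, ← hx, ← hy]; linear_combination -hcd)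
      obtain ⟨l, hl1, hl2⟩ := pair_syz hreg (c := p f + z * c) (d := q f + z * d) (by
        linear_combination hf + z * hcd)
      refine ⟨(l, f2), ?_⟩
      rw [hE2, hf2, hτ]
      simp only [map_sub, map_smul, smul_eq_mul, pa, pb, qa, qb]
      have e1 : l • (x • b - y • a) = (p f + z * c) • a + (q f + z * d) • b := by
        rw [hl1, hl2]; module
      rw [e1]
      module
  have R3 : LinearMap.range E3 = LinearMap.ker E2 := by
    apply le_antisymm
    · rintro _ ⟨⟨l, f⟩, rfl⟩
      rw [LinearMap.mem_ker, hE3, hE2]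
      simp only [map_add, map_smul, hdg, c23, hτ, map_sub, smul_eq_mul, pa, pb, qa, qb, map_zero]
      module
    · rintro ⟨l, f⟩ hf
      rw [LinearMap.mem_ker, hE2] at hf
      have hp := congrArg p hf
      have hq := congrArg q hf
      simp only [map_add, map_smul, hτ, map_sub, smul_eq_mul, pa, pb, qa, qb, map_zero] at hp hq
      set P := p (d2 f) with hP
      set R := q (d2 f) with hR
      have hp' : z * P = l * y := by linear_combination hp
      have hq' : z * R = - (l * x) := by linear_combination hq
      have hz : d2 f = P • a + R • b := by
        rw [hτ] at hf
        have e1 : (z * P) • a = (l * y) • a := by rw [hp']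
        have e2 : (z * R) • b = (-(l * x)) • b := by rw [hq']
        linear_combination (norm := module) hf - e1 - e2
      have h0 := c12 f
      rw [hz] at h0
      simp only [map_add, map_smul, smul_eq_mul, ← hx, ← hy] at h0
      obtain ⟨μ, h1, h2⟩ := pair_syz hreg h0
      have hl : l = -z * μ := by
        have := r1 (l + z * μ) (by rw [h2] at hq'; linear_combination hq')
        linear_combination this
      obtain ⟨h, hh⟩ := x23 (f - μ • g) (by
        simp only [map_sub, map_smul, hdg, hz, h1, h2]; module)
      refine ⟨(μ, h), ?_⟩
      rw [hE3, hh, hl]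
      simp
  have K3 : LinearMap.ker E3 = ⊥ := by
    rw [LinearMap.ker_eq_bot']
    rintro ⟨l, f⟩ hf
    rw [hE3] at hf
    have h2 : l • g + d3 f = 0 := congrArg Prod.snd hf
    have h4 := congrArg d2 h2
    simp only [map_add, map_smul, hdg, c23, map_zero] at h4
    have h5 := congrArg q h4
    simp only [map_add, map_smul, map_sub, smul_eq_mul, qa, qb, map_zero] at h5
    have hl : l = 0 := r1 l (by linear_combination h5)
    subst hl
    have : f = 0 := i3 (by simpa using h2)
    rw [this]; rfl
  let s2 : (Q × (Fin r → Q)) ≃ₗ[Q] (Fin (r + 1) → Q) := Fin.consLinearEquiv Q (fun _ => Q)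
  let s3 : (Q × (Fin n → Q)) ≃ₗ[Q] (Fin (n + 1) → Q) := Fin.consLinearEquiv Q (fun _ => Q)
  refine ⟨D1, E2 ∘ₗ s2.symm.toLinearMap, s2.toLinearMap ∘ₗ E3 ∘ₗ s3.symm.toLinearMap,
    ?_, ?_, ?_, ?_, ?_, ?_⟩
  · apply le_antisymm
    · rintro _ ⟨f, rfl⟩
      have : D1 f = (((1 - z) * p f) * x + ((1 - z) * q f) * y) + z * d1 f := by rw [hD1]; ring
      rw [this]
      exact Submodule.add_mem_sup (Ideal.mem_span_pair.mpr ⟨_, _, rfl⟩)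
        (Ideal.mul_mem_mul (Ideal.mem_span_singleton_self z) ⟨f, rfl⟩)
    · refine sup_le ?_ ?_
      · rw [Ideal.span_le]
        intro v hv
        rcases hv with rfl | rfl
        · exact ⟨a, hD1a⟩
        · exact ⟨b, hD1b⟩
      · rw [Ideal.mul_le]
        rintro v hv _ ⟨f, rfl⟩
        obtain ⟨c, rfl⟩ := Ideal.mem_span_singleton.mp hv
        exact ⟨c • τ f, by rw [map_smul, hD1τ, smul_eq_mul]; ring⟩
  · rw [LinearMap.range_comp_of_range_eq_top _ s2.symm.range, R2]
  · ext v
    constructor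
    · rintro ⟨f, rfl⟩
      have : E3 (s3.symm f) ∈ LinearMap.ker E2 := R3 ▸ ⟨_, rfl⟩
      simpa using this
    · intro hv
      have : s2.symm v ∈ LinearMap.range E3 := by rw [R3]; simpa using hv
      obtain ⟨f, hf⟩ := this
      exact ⟨s3 f, by simp [hf]⟩
  · rw [LinearMap.ker_eq_bot]
    have := LinearMap.ker_eq_bot.mp K3
    simp only [LinearMap.coe_comp, LinearEquiv.coe_coe]
    exact s2.injective.comp (this.comp s3.symm.injective)
  · intro f i
    obtain ⟨⟨l, f⟩, rfl⟩ := s2.surjective f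
    simp only [LinearMap.coe_comp, LinearEquiv.coe_coe, Function.comp, LinearEquiv.symm_apply_apply]
    rw [hE2, hτ]
    have hd := fun i => m2 f i
    have hlin : ∀ t : (Fin m → Q) →ₗ[Q] Q, t (d2 f) ∈ maximalIdeal Q := fun t => by
      rw [LinearMap.pi_apply_eq_sum_univ t]
      exact sum_mem fun i _ => Ideal.mul_mem_right _ _ (hd i)
    simp only [Pi.add_apply, Pi.smul_apply, Pi.sub_apply, smul_eq_mul]
    refine add_mem (Ideal.mul_mem_left _ _ (sub_mem (Ideal.mul_mem_right _ _ r4)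
      (Ideal.mul_mem_right _ _ r5))) (add_mem (hd i) (Ideal.mul_mem_left _ _ (add_mem
        (Ideal.mul_mem_right _ _ (hlin p)) (Ideal.mul_mem_right _ _ (hlin q)))))
  · intro f i
    obtain ⟨⟨l, f⟩, rfl⟩ := s3.surjective f
    simp only [LinearMap.coe_comp, LinearEquiv.coe_coe, Function.comp, LinearEquiv.symm_apply_apply]
    rw [hE3]
    refine Fin.cases ?_ (fun i => ?_) i
    · change -z * l ∈ _
      exact Ideal.mul_mem_right _ _ (neg_mem r6)
    · change l * g i + d3 f i ∈ _
      exact add_mem (Ideal.mul_mem_left _ _ (hg i)) (m3 f i)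

lemma alt_sum {N : ℕ} (r : Fin N → Q) (U : Fin N → Fin N → Q) :
    ∑ l, r l * ∑ k, r k * (U l k - U k l) = 0 := by
  have : ∑ l, r l * ∑ k, r k * (U l k - U k l) =
      (∑ l, ∑ k, r l * r k * U l k) - ∑ l, ∑ k, r l * r k * U k l := by
    rw [← Finset.sum_sub_distrib]
    refine Finset.sum_congr rfl fun l _ => ?_
    rw [Finset.mul_sum, ← Finset.sum_sub_distrib]
    refine Finset.sum_congr rfl fun k _ => ?_
    ring
  rw [this, Finset.sum_comm (f := fun l k => r l * r k * U k l), sub_eq_zero]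
  exact Finset.sum_congr rfl fun l _ => Finset.sum_congr rfl fun k _ => by ring

lemma caseA (h21 : LinearMap.range d2 = LinearMap.ker d1) (e1 e2 e3 e4 : Fin m → Q)
    (hreg : ∀ a, d1 e1 * a ∈ Ideal.span {d1 e2, d1 e3} → a ∈ Ideal.span {d1 e2, d1 e3})
    {N : ℕ} (ρ g : Fin N → Q) (hρ : ∀ l, ρ l ∈ maximalIdeal Q) (hsum : ∑ l, ρ l * g l = d1 e1)
    (hg : ∀ l, g l * d1 e4 ∈ Ideal.span {d1 e1, d1 e2, d1 e3}) :
    ∃ u v : Q, ∃ G : Fin r → Q, (∀ i, G i ∈ maximalIdeal Q) ∧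
      d2 G = d1 e1 • (e4 + u • e2 + v • e3) - d1 (e4 + u • e2 + v • e3) • e1 := by
  have h1 : ∀ l, ∃ c1 c2 c3, c1 * d1 e1 + c2 * d1 e2 + c3 * d1 e3 = g l * d1 e4 := fun l =>
    Submodule.mem_span_triple.mp (hg l)
  choose c1 c2 c3 hc using h1
  have hs1 : (∑ l, ρ l * c1 l) * d1 e1 + (∑ l, ρ l * c2 l) * d1 e2 + (∑ l, ρ l * c3 l) * d1 e3
      = d1 e1 * d1 e4 := by
    rw [← hsum, Finset.sum_mul, Finset.sum_mul, Finset.sum_mul, Finset.sum_mul, hsum,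
      ← Finset.sum_add_distrib, ← Finset.sum_add_distrib]
    exact Finset.sum_congr rfl fun l _ => by linear_combination ρ l * hc l
  obtain ⟨u, v, huv⟩ := Ideal.mem_span_pair.mp (hreg ((∑ l, ρ l * c1 l) - d1 e4)
    (Ideal.mem_span_pair.mpr ⟨-(∑ l, ρ l * c2 l), -(∑ l, ρ l * c3 l), by
      linear_combination -hs1⟩))
  have hx4 : d1 (e4 + u • e2 + v • e3) = ∑ l, ρ l * c1 l := by
    simp only [map_add, map_smul, smul_eq_mul]; linear_combination huv
  refine ⟨u, v, ?_⟩
  generalize e4 + u • e2 + v • e3 = e at hx4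
  have h2 : ∀ l k, ∃ A B, A * d1 e2 + B * d1 e3 = g l * c1 k - g k * c1 l := fun l k =>
    Ideal.mem_span_pair.mp (hreg _ (Ideal.mem_span_pair.mpr
      ⟨g k * c2 l - g l * c2 k, g k * c3 l - g l * c3 k, by
        linear_combination g k * hc l - g l * hc k⟩))
  choose A B hAB using h2
  let U : Fin N → Fin N → Q := fun l k => if l < k then A l k else 0
  let V : Fin N → Fin N → Q := fun l k => if l < k then B l k else 0
  have hUV : ∀ l k, (U l k - U k l) * d1 e2 + (V l k - V k l) * d1 e3 = g l * c1 k - g k * c1 l := by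
    intro l k
    rcases lt_trichotomy l k with h | h | h
    · simp only [U, V, h, h.not_gt, if_true, if_false]
      linear_combination hAB l k
    · subst h; ring
    · simp only [U, V, h, h.not_gt, if_true, if_false]
      linear_combination - hAB k l
  have h3 : ∀ l, ∃ f, d2 f = g l • e - c1 l • e1 - (∑ k, ρ k * (U l k - U k l)) • e2
      - (∑ k, ρ k * (V l k - V k l)) • e3 := by
    intro l
    have : g l • e - c1 l • e1 - (∑ k, ρ k * (U l k - U k l)) • e2
      - (∑ k, ρ k * (V l k - V k l)) • e3 ∈ LinearMap.range d2 := by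
      rw [h21, LinearMap.mem_ker]
      simp only [map_sub, map_smul, smul_eq_mul, hx4]
      have e5 : (∑ k, ρ k * (U l k - U k l)) * d1 e2 + (∑ k, ρ k * (V l k - V k l)) * d1 e3
          = g l * (∑ k, ρ k * c1 k) - (∑ k, ρ k * g k) * c1 l := by
        rw [Finset.sum_mul, Finset.sum_mul, Finset.sum_mul, Finset.mul_sum,
          ← Finset.sum_add_distrib, ← Finset.sum_sub_distrib]
        exact Finset.sum_congr rfl fun k _ => by linear_combination ρ k * hUV l k
      rw [hsum] at e5
      linear_combination -e5
    exact this
  choose F hF using h3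
  refine ⟨∑ l, ρ l • F l, fun i => ?_, ?_⟩
  · rw [Finset.sum_apply]
    exact sum_mem fun l _ => Ideal.mul_mem_right _ _ (hρ l)
  · simp only [map_sum, map_smul, hF, smul_sub, Finset.sum_sub_distrib, smul_smul]
    simp only [← Finset.sum_smul]
    rw [alt_sum, alt_sum, hsum, hx4]
    simp

lemma dichotomy (f f1 f2 : Fin r → Q) :
    (∃ α β : Q, ∀ i, (f - α • f1 - β • f2) i ∈ maximalIdeal Q) ∨
    ∃ σ : (Fin r → Q) →ₗ[Q] Q, IsUnit (σ f) ∧ σ f1 ∈ maximalIdeal Q ∧ σ f2 ∈ maximalIdeal Q := by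
  classical
  let bar : (Fin r → Q) → (Fin r → ResidueField Q) := fun v i => residue Q (v i)
  by_cases h : bar f ∈ Submodule.span (ResidueField Q) {bar f1, bar f2}
  · left
    obtain ⟨α, β, hab⟩ := Submodule.mem_span_pair.mp h
    obtain ⟨α, rfl⟩ := residue_surjective α
    obtain ⟨β, rfl⟩ := residue_surjective β
    refine ⟨α, β, fun i => ?_⟩
    rw [← residue_eq_zero_iff]
    have := congrFun hab i
    simp only [bar, Pi.add_apply, Pi.smul_apply, smul_eq_mul] at this
    simp only [Pi.sub_apply, Pi.smul_apply, smul_eq_mul, map_sub, map_mul, ← this]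
    ring
  · right
    obtain ⟨φ, hφ, hle⟩ := Submodule.exists_le_ker_of_notMem h
    have h1 : ∀ i, ∃ s, residue Q s = φ (fun j => if i = j then 1 else 0) := fun i => residue_surjective _
    choose s hs using h1
    let σ : (Fin r → Q) →ₗ[Q] Q := ∑ i, s i • LinearMap.proj i
    have hσ : ∀ v, residue Q (σ v) = φ (bar v) := by
      intro v
      rw [LinearMap.pi_apply_eq_sum_univ φ]
      simp only [σ, LinearMap.sum_apply, LinearMap.smul_apply, LinearMap.proj_apply, smul_eq_mul,
        map_sum, map_mul, hs, bar]
      exact Finset.sum_congr rfl fun i _ => mul_comm _ _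
    refine ⟨σ, ?_, ?_, ?_⟩
    · rw [← residue_ne_zero_iff_isUnit, hσ]; exact hφ
    · rw [← residue_eq_zero_iff, hσ]; exact hle (Submodule.subset_span (by simp))
    · rw [← residue_eq_zero_iff, hσ]; exact hle (Submodule.subset_span (by simp))

lemma lift_max {u : Q} (hu : u ∈ maximalIdeal Q * (LinearMap.range d1 : Ideal Q)) :
    ∃ η, (∀ i, η i ∈ maximalIdeal Q) ∧ d1 η = u := by
  refine Submodule.mul_induction_on hu ?_ ?_
  · rintro a ha _ ⟨f, rfl⟩
    exact ⟨a • f, fun i => Ideal.mul_mem_right _ _ ha, by simp⟩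
  · rintro x y ⟨a, ha, rfl⟩ ⟨b, hb, rfl⟩
    exact ⟨a + b, fun i => add_mem (ha i) (hb i), by simp⟩

lemma lin_mem {η : Fin m → Q} (h : ∀ i, η i ∈ maximalIdeal Q) (p : (Fin m → Q) →ₗ[Q] Q) :
    p η ∈ maximalIdeal Q := by
  rw [LinearMap.pi_apply_eq_sum_univ p]
  exact sum_mem fun i _ => Ideal.mul_mem_right _ _ (h i)

/-- Koszul syzygy with a vector in the maximal ideal. -/
lemma kos_max (h21 : LinearMap.range d2 = LinearMap.ker d1) (a : Fin m → Q) {η : Fin m → Q}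
    (h : ∀ i, η i ∈ maximalIdeal Q) :
    ∃ G, (∀ i, G i ∈ maximalIdeal Q) ∧ d2 G = d1 a • η - d1 η • a := by
  rw [← mem_smul_top_pi] at h
  refine Submodule.smul_induction_on h ?_ ?_
  · intro c hc b _
    obtain ⟨f, hf⟩ := exists_kos h21 a b
    refine ⟨c • f, fun i => Ideal.mul_mem_right _ _ hc, ?_⟩
    simp only [map_smul, hf, smul_eq_mul]; module
  · rintro x y ⟨G, hG, h1⟩ ⟨H, hH, h2⟩
    refine ⟨G + H, fun i => add_mem (hG i) (hH i), ?_⟩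
    simp only [map_add, h1, h2]; module

lemma finish (h21 : LinearMap.range d2 = LinearMap.ker d1)
    (h32 : LinearMap.range d3 = LinearMap.ker d2) (h3 : LinearMap.ker d3 = ⊥)
    (m1 : ∀ f, d1 f ∈ maximalIdeal Q)
    (m2 : ∀ f i, d2 f i ∈ maximalIdeal Q) (m3 : ∀ f i, d3 f i ∈ maximalIdeal Q)
    (k1 k2 k3 : Fin m → Q) (hk : Reg3 (d1 k1) (d1 k2) (d1 k3))
    (a b : Fin m → Q) (p q : (Fin m → Q) →ₗ[Q] Q) (hpq : IsUnit (p a * q b - p b * q a))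
    (g : Fin r → Q) (hg : ∀ i, g i ∈ maximalIdeal Q) (hdg : d2 g = d1 a • b - d1 b • a) :
    ∃ J : Ideal Q, Linked (LinearMap.range d1 : Ideal Q) J ∧
      (∃ x y z : Q, x ∈ J ∧ y ∈ J ∧ z ∈ J ∧ IsRegular Q [x, y, z]) ∧
      ∃ (D1 : (Fin m → Q) →ₗ[Q] Q)
      (D2 : (Fin (r + 1) → Q) →ₗ[Q] (Fin m → Q))
      (D3 : (Fin (n + 1) → Q) →ₗ[Q] (Fin (r + 1) → Q)),
      LinearMap.range D1 = J ∧
      LinearMap.range D2 = LinearMap.ker D1 ∧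
      LinearMap.range D3 = LinearMap.ker D2 ∧
      LinearMap.ker D3 = ⊥ ∧ J ≤ maximalIdeal Q ∧
      (∀ f i, D2 f i ∈ maximalIdeal Q) ∧ (∀ f i, D3 f i ∈ maximalIdeal Q) := by
  have hI : (LinearMap.range d1 : Ideal Q) ≤ maximalIdeal Q := by rintro _ ⟨f, rfl⟩; exact m1 f
  obtain ⟨u, hu, v, hv, w, hw, hreg⟩ := exists_reg3 hk hI ⟨k1, rfl⟩ ⟨k2, rfl⟩ ⟨k3, rfl⟩
    (d1 a) (d1 b) (d1 0) ⟨a, rfl⟩ ⟨b, rfl⟩ ⟨0, rfl⟩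
  obtain ⟨η1, hη1, rfl⟩ := lift_max hu
  obtain ⟨η2, hη2, rfl⟩ := lift_max hv
  obtain ⟨η3, hη3, rfl⟩ := lift_max hw
  simp only [← map_add, zero_add] at hreg
  obtain ⟨g1, hg1, hdg1⟩ := kos_max h21 (a + η1) hη2
  obtain ⟨g2, hg2, hdg2⟩ := kos_max h21 b hη1
  have hG : d2 (g + g1 - g2) = d1 (a + η1) • (b + η2) - d1 (b + η2) • (a + η1) := by
    simp only [map_add, map_sub, hdg, hdg1, hdg2]; module
  have hGm : ∀ i, (g + g1 - g2) i ∈ maximalIdeal Q := fun i =>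
    sub_mem (add_mem (hg i) (hg1 i)) (hg2 i)
  have hpq' : IsUnit (p (a + η1) * q (b + η2) - p (b + η2) * q (a + η1)) := by
    rw [← residue_ne_zero_iff_isUnit] at hpq ⊢
    have e1 := (residue_eq_zero_iff _).mpr (lin_mem hη1 p)
    have e2 := (residue_eq_zero_iff _).mpr (lin_mem hη2 p)
    have e3 := (residue_eq_zero_iff _).mpr (lin_mem hη1 q)
    have e4 := (residue_eq_zero_iff _).mpr (lin_mem hη2 q)
    simpa [e1, e2, e3, e4] using hpq
  generalize a + η1 = a' at *
  generalize b + η2 = b' at *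
  obtain ⟨δ, hδ⟩ := hpq'.exists_left_inv
  let p' := δ • (q b' • p - p b' • q)
  let q' := δ • (p a' • q - q a' • p)
  obtain ⟨D1, D2, D3, t1, t2, t3, t4, t5, t6⟩ := bdl_format h21 h32 h3 m2 m3 a' b' p' q'
    (by simp [p']; linear_combination hδ) (by simp [p']; ring_nf)
    (by simp [q']; ring_nf) (by simp [q']; linear_combination hδ) (d1 η3) hreg _ hGm hG
  refine ⟨_, linked_bdl h21 h32 h3 a' b' η3 hreg, ?_, D1, D2, D3, t1, t2, t3, t4, ?_, t5, t6⟩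
  · obtain ⟨r1, r2, r3, r4, r5, r6⟩ := id hreg
    refine ⟨d1 a', d1 b', d1 η3 * d1 η3, ?_, ?_, ?_, (reg3_iff _ _ _).mpr
      ⟨r1, r2, fun a ha => r3 _ (r3 _ (by rwa [← mul_assoc])), r4, r5, Ideal.mul_mem_left _ _ r6⟩⟩
    · exact Ideal.mem_sup_left (Ideal.subset_span (by simp))
    · exact Ideal.mem_sup_left (Ideal.subset_span (by simp))
    · exact Ideal.mem_sup_right (Ideal.mul_mem_mul (Ideal.mem_span_singleton_self _) ⟨η3, rfl⟩)
  · refine sup_le ?_ (Ideal.mul_le_left.trans ?_)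
    · rw [Ideal.span_le]
      rintro v (rfl | rfl)
      · exact m1 _
      · exact m1 _
    · rw [Ideal.span_le]
      rintro v rfl
      exact m1 _

/-- Existence of a pair with vanishing product. -/
lemma exists_pair (h21 : LinearMap.range d2 = LinearMap.ker d1)
    (h32 : LinearMap.range d3 = LinearMap.ker d2) (h3 : LinearMap.ker d3 = ⊥)
    (m1 : ∀ f, d1 f ∈ maximalIdeal Q)
    (m3 : ∀ f i, d3 f i ∈ maximalIdeal Q)
    (k1 k2 k3 : Fin m → Q) (hk : Reg3 (d1 k1) (d1 k2) (d1 k3)) (hm : 5 ≤ m) :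
    ∃ (a b : Fin m → Q) (p q : (Fin m → Q) →ₗ[Q] Q) (g : Fin r → Q),
      IsUnit (p a * q b - p b * q a) ∧ (∀ i, g i ∈ maximalIdeal Q) ∧
      d2 g = d1 a • b - d1 b • a := by
  classical
  have hI : (LinearMap.range d1 : Ideal Q) ≤ maximalIdeal Q := by rintro _ ⟨f, rfl⟩; exact m1 f
  let i1 : Fin m := ⟨0, by omega⟩
  let i2 : Fin m := ⟨1, by omega⟩
  let i3 : Fin m := ⟨2, by omega⟩
  let i4 : Fin m := ⟨3, by omega⟩
  let s : Fin m → (Fin m → Q) := fun i => Pi.single i 1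
  obtain ⟨u, hu, v, hv, w, hw, hreg⟩ := exists_reg3 hk hI ⟨k1, rfl⟩ ⟨k2, rfl⟩ ⟨k3, rfl⟩
    (d1 (s i2)) (d1 (s i3)) (d1 (s i1)) ⟨_, rfl⟩ ⟨_, rfl⟩ ⟨_, rfl⟩
  obtain ⟨η2, hη2, rfl⟩ := lift_max hu
  obtain ⟨η3, hη3, rfl⟩ := lift_max hv
  obtain ⟨η1, hη1, rfl⟩ := lift_max hw
  simp only [← map_add] at hreg
  have z1 := fun i => (residue_eq_zero_iff _).mpr (hη1 i)
  have z2 := fun i => (residue_eq_zero_iff _).mpr (hη2 i)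
  have z3 := fun i => (residue_eq_zero_iff _).mpr (hη3 i)
  set e1 := s i1 + η1 with he1
  set e2 := s i2 + η2 with he2
  set e3 := s i3 + η3 with he3
  obtain ⟨f12, h12⟩ := exists_kos h21 e1 e2
  obtain ⟨f13, h13⟩ := exists_kos h21 e1 e3
  obtain ⟨f23, h23⟩ := exists_kos h21 e2 e3
  obtain ⟨w, hw⟩ := exists_w h21 h32 h12 h13 h23
  have hwm := w_mem h21 h32 h3 h12 h13 h23 hw
  rcases dichotomy f23 f12 f13 with ⟨α, β, hab⟩ | ⟨σ, hσ1, hσ2, hσ3⟩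
  · refine ⟨e2 - β • e1, e3 + α • e1, LinearMap.proj i2, LinearMap.proj i3,
      f23 - α • f12 - β • f13, ?_, hab, ?_⟩
    · rw [← residue_ne_zero_iff_isUnit]
      simp [he1, he2, he3, s, i1, i2, i3, z1, z2, z3, Pi.single_apply]
    · simp only [map_add, map_sub, map_smul, h12, h13, h23, smul_eq_mul]
      module
  · set J : Ideal Q := Submodule.colon (Ideal.span {d1 e1, d1 e2, d1 e3})
      (LinearMap.range d1 : Ideal Q) with hJ
    have hmJ : ∀ j, j ∈ J ↔ ∀ p ∈ (LinearMap.range d1 : Ideal Q),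
        j * p ∈ Ideal.span {d1 e1, d1 e2, d1 e3} := fun j => by
      rw [hJ, Submodule.mem_colon]; rfl
    have hKJ : Ideal.span {d1 e1, d1 e2, d1 e3} ≤ J :=
      fun j hj => (hmJ j).mpr fun p _ => Ideal.mul_mem_right _ _ hj
    have hwJ : ∀ l, w l ∈ J := by
      intro l
      rw [hmJ]
      rintro p ⟨a, rfl⟩
      obtain ⟨k1, k2, k3, hk⟩ := hwm a
      have := congrFun hk l
      simp at this
      exact Submodule.mem_span_triple.mpr ⟨k1 l, k2 l, k3 l, by
        simp only [smul_eq_mul]; linear_combination - this⟩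
    have hx1 : d1 e1 ∈ maximalIdeal Q • J := by
      have q1 := congrArg σ hw
      simp only [map_add, map_sub, map_smul, smul_eq_mul] at q1
      obtain ⟨δ, hδ⟩ := hσ1.exists_left_inv
      have q2 : d1 e1 = δ * (σ (d3 w) + σ f13 * d1 e2 - σ f12 * d1 e3) := by
        linear_combination - d1 e1 * hδ - δ * q1
      rw [q2]
      refine Ideal.mul_mem_left _ _ (sub_mem (add_mem ?_ ?_) ?_)
      · have : σ (d3 w) = ∑ i, w i * σ (d3 (fun j => if i = j then 1 else 0)) := by
          simpa using LinearMap.pi_apply_eq_sum_univ (σ ∘ₗ d3) w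
        rw [this]
        refine sum_mem fun i _ => ?_
        rw [mul_comm]
        exact Ideal.mul_mem_mul (lin_mem (m3 _) σ) (hwJ i)
      · exact Ideal.mul_mem_mul hσ3 (hKJ (Ideal.subset_span (by simp)))
      · exact Ideal.mul_mem_mul hσ2 (hKJ (Ideal.subset_span (by simp)))
    obtain ⟨N, γ, hγ⟩ := Submodule.fg_iff_exists_fin_generating_family.mp
      (IsNoetherian.noetherian J)
    rw [← hγ] at hx1
    obtain ⟨ρ, hρ, hsum⟩ := (Submodule.mem_ideal_smul_span_iff_exists_sum _ _ _).mp hx1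
    rw [Finsupp.sum_fintype _ _ (by simp)] at hsum
    obtain ⟨u, v, G, hG, hdG⟩ := caseA h21 e1 e2 e3 (s i4) hreg.2.2.1 ρ γ hρ hsum
      (fun l => (hmJ _).mp (hγ ▸ Submodule.subset_span ⟨l, rfl⟩) _ ⟨_, rfl⟩)
    refine ⟨e1, _, LinearMap.proj i1, LinearMap.proj i4, G, ?_, hG, hdG⟩
    rw [← residue_ne_zero_iff_isUnit]
    simp [he1, he2, he3, s, i1, i2, i3, i4, z1, z2, z3, Pi.single_apply]

end cx

theorem stmt_5 (Q : Type*) [CommRing Q] [IsNoetherianRing Q] [IsLocalRing Q]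
    (I : Ideal Q) (m n : ℕ) (hI : IsGrade3PerfectOfFormat I m n) (hm : 5 ≤ m) :
    ∃ J : Ideal Q, IsGrade3PerfectOfFormat J m (n + 1) ∧ Linked I J := by
  obtain ⟨⟨x, y, z, hx, hy, hz, hreg⟩, -, hn, d1, d2, d3, rfl, h21, h32, h3, m1, m2, m3⟩ := hI
  obtain ⟨k1, rfl⟩ := hx
  obtain ⟨k2, rfl⟩ := hy
  obtain ⟨k3, rfl⟩ := hz
  rw [reg3_iff] at hreg
  have m1' : ∀ f, d1 f ∈ maximalIdeal Q := fun f => m1 ⟨f, rfl⟩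
  have m2' : ∀ f i, d2 f i ∈ maximalIdeal Q := fun f => (mem_smul_top_pi _ _).mp (m2 ⟨f, rfl⟩)
  have m3' : ∀ f i, d3 f i ∈ maximalIdeal Q := fun f => (mem_smul_top_pi _ _).mp (m3 ⟨f, rfl⟩)
  obtain ⟨a, b, p, q, g, hu, hg, hdg⟩ := exists_pair h21 h32 h3 m1' m3' k1 k2 k3 hreg hm
  obtain ⟨J, hL, hJ, H⟩ := finish h21 h32 h3 m1' m2' m3' k1 k2 k3 hreg a b p q hu g hg hdg
  refine ⟨J, ⟨hJ, by omega, by omega, ?_⟩, hL⟩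
  have hr : m + n - 1 + 1 = m + (n + 1) - 1 := by omega
  rw [hr] at H
  obtain ⟨D1, D2, D3, t1, t2, t3, t4, t5, t6, t7⟩ := H
  refine ⟨D1, D2, D3, t1, t2, t3, t4, t5, ?_, ?_⟩
  · rintro _ ⟨f, rfl⟩
    exact (mem_smul_top_pi _ _).mpr (t6 f)
  · rintro _ ⟨f, rfl⟩
    exact (mem_smul_top_pi _ _).mpr (t7 f)
end
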